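/- arXiv:2405.01894 — 2 statements merged into one kernel-verified Lean document; each statement's English description precedes it below -/
import Mathlib

section
/- Assume conditions (Cond1) and (CondAttr2). Then any bounded complete trajectory of ℛ⁺ distinct from 0 and ξ_M is of the type γ(t) = 0 for t ≤ τ and γ(t) = u(t) for t ≥ τ, where τ ∈ ℝ and u is the unique solution on [τ,∞) of the linear problem ∂u/∂t − ∂²u/∂x² = b(t) + ω(t)u on (τ,∞)×(0,1) with Dirichlet boundary conditions and u(τ,·) = 0. Moreover every such γ satisfies γ(t) → 0 as t → −∞ and ‖γ(t) − ξ_M(t)‖ → 0 as t → +∞. -/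
open MeasureTheory Set

noncomputable section

/-- Lebesgue measure restricted to the spatial interval `(0,1)`. -/
def μ01 : Measure ℝ := volume.restrict (Ioo (0:ℝ) 1)

/-- `H = L²(0,1)`. -/
abbrev Hsp : Type := Lp ℝ 2 μ01

/-- The Heaviside multifunction. -/
def heaviside (s : ℝ) : Set ℝ :=
  if s < 0 then {-1} else if s = 0 then Icc (-1) 1 else {1}

/-- Condition (Cond1). -/
structure Cond1 (b ω : ℝ → ℝ) (b0 b1 ω0 ω1 : ℝ) : Prop where
  contb : Continuous b
  contω : Continuous ω
  b0pos : 0 < b0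
  blb : ∀ t, b0 ≤ b t
  bub : ∀ t, b t ≤ b1
  ω0nonneg : 0 ≤ ω0
  ωlb : ∀ t, ω0 ≤ ω t
  ωub : ∀ t, ω t ≤ ω1

/-- `v ∈ H²(0,1) ∩ H¹₀(0,1)` with (weak) second derivative `w ∈ L²(0,1)`:
`v` has a representative that is continuous on `[0,1]`, vanishes at the boundary,
is differentiable on `(0,1)` and whose derivative is an antiderivative of `w`. -/
def InDomainA (v w : Hsp) : Prop :=
  ∃ vt : ℝ → ℝ, ContinuousOn vt (Icc 0 1) ∧ vt 0 = 0 ∧ vt 1 = 0 ∧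
    (∀ᵐ x ∂μ01, vt x = v x) ∧
    ∃ g : ℝ → ℝ,
      (∀ x ∈ Ioo (0:ℝ) 1, HasDerivAt vt (g x) x) ∧
      ∀ x ∈ Ioo (0:ℝ) 1, ∀ y ∈ Ioo (0:ℝ) 1, g x - g y = ∫ z in y..x, w z

/-- A strong solution of the inclusion on `[τ,∞)`, with explicit data:
`r` is the `L²`-selection, `u'` the time derivative, `uxx` the second spatial derivative. -/
structure IsStrongSolutionWith (b ω : ℝ → ℝ) (τ : ℝ) (u r u' uxx : ℝ → Hsp) : Prop where
  cont : ContinuousOn u (Ici τ)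
  rmem : ∀ T, τ < T → MemLp r 2 (volume.restrict (Ioo τ T))
  sel : ∀ᵐ t ∂(volume.restrict (Ioi τ)), ∀ᵐ x ∂μ01,
      ∃ h ∈ heaviside (u t x), r t x = b t * h + ω t * u t x
  dom : ∀ᵐ t ∂(volume.restrict (Ioi τ)), InDomainA (u t) (uxx t)
  eq : ∀ᵐ t ∂(volume.restrict (Ioi τ)), u' t = r t + uxx t
  fund : ∀ T1 T2 : ℝ, τ < T1 → T1 < T2 →
      IntervalIntegrable u' volume T1 T2 ∧
      ∀ t ∈ Icc T1 T2, u t = u T1 + ∫ s in T1..t, u' s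

/-- A strong solution of the inclusion on `[τ,∞)`. -/
def IsStrongSolution (b ω : ℝ → ℝ) (τ : ℝ) (u : ℝ → Hsp) : Prop :=
  ∃ r u' uxx, IsStrongSolutionWith b ω τ u r u' uxx

/-- The solution is non-negative on `[τ,∞)`. -/
def NonnegOn (u : ℝ → Hsp) (τ : ℝ) : Prop :=
  ∀ t, τ ≤ t → ∀ᵐ x ∂μ01, 0 ≤ u t x

/-- `v` is positive: it has a continuous representative on `[0,1]`
which is strictly positive on `(0,1)`. -/
def IsPositive (v : Hsp) : Prop :=
  ∃ vt : ℝ → ℝ, ContinuousOn vt (Icc 0 1) ∧ (∀ᵐ x ∂μ01, vt x = v x) ∧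
    ∀ x ∈ Ioo (0:ℝ) 1, 0 < vt x


/-- A strong solution of the linear problem
`∂u/∂t − ∂²u/∂x² = b(t) + ω(t)u` on `(τ,∞)×(0,1)` with Dirichlet boundary
conditions, with explicit time derivative `u'` and second spatial derivative `uxx`. -/
structure IsLinearSolutionWith (b ω : ℝ → ℝ) (τ : ℝ) (u u' uxx : ℝ → Hsp) : Prop where
  cont : ContinuousOn u (Ici τ)
  dom : ∀ᵐ t ∂(volume.restrict (Ioi τ)), InDomainA (u t) (uxx t)
  eq : ∀ᵐ t ∂(volume.restrict (Ioi τ)), ∀ᵐ x ∂μ01,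
      u' t x = b t + ω t * u t x + uxx t x
  fund : ∀ T1 T2 : ℝ, τ < T1 → T1 < T2 →
      IntervalIntegrable u' volume T1 T2 ∧
      ∀ t ∈ Icc T1 T2, u t = u T1 + ∫ s in T1..t, u' s

/-- A strong solution of the linear problem on `[τ,∞)`. -/
def IsLinearSolution (b ω : ℝ → ℝ) (τ : ℝ) (u : ℝ → Hsp) : Prop :=
  ∃ u' uxx, IsLinearSolutionWith b ω τ u u' uxx

/-- A complete trajectory of the inclusion. -/
def IsCompleteTrajectory (b ω : ℝ → ℝ) (φ : ℝ → Hsp) : Prop :=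
  ∀ τ : ℝ, IsStrongSolution b ω τ φ

/-- A bounded function into `H`. -/
def BddTraj (φ : ℝ → Hsp) : Prop := ∃ M : ℝ, ∀ t : ℝ, ‖φ t‖ ≤ M

section aux
open Filter Topology

theorem ac_of_dist_le {X Y Z : Type*} [PseudoMetricSpace X] [PseudoMetricSpace Y]
    [PseudoMetricSpace Z]
    {f : ℝ → X} {g : ℝ → Y} {h : ℝ → Z} {a b C : ℝ}
    (hg : AbsolutelyContinuousOnInterval g a b) (hh : AbsolutelyContinuousOnInterval h a b)
    (H : ∀ x ∈ uIcc a b, ∀ y ∈ uIcc a b,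
      dist (f x) (f y) ≤ C * (dist (g x) (g y) + dist (h x) (h y))) :
    AbsolutelyContinuousOnInterval f a b := by
  unfold AbsolutelyContinuousOnInterval at hg hh ⊢
  apply squeeze_zero' ?_ ?_ (by simpa using (hg.add hh).const_mul C)
  · exact Filter.Eventually.of_forall <| fun _ ↦ Finset.sum_nonneg (fun i hi ↦ dist_nonneg)
  rw [eventually_inf_principal]
  filter_upwards with (n, I) hnI
  simp only [← Finset.sum_add_distrib, Finset.mul_sum]
  gcongr with i hi
  exact H _ (hnI.1 i hi).1 _ (hnI.1 i hi).2

theorem ac_primitive {E : Type*} [NormedAddCommGroup E] [NormedSpace ℝ E] [CompleteSpace E]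
    {A A' : ℝ → E} {a b : ℝ} (hab : a ≤ b) (hi : IntervalIntegrable A' volume a b)
    (hA : ∀ t ∈ Icc a b, A t = A a + ∫ s in a..t, A' s) :
    AbsolutelyContinuousOnInterval A a b := by
  have hn : IntervalIntegrable (fun s => ‖A' s‖) volume a b := hi.norm
  have h1 := hn.absolutelyContinuousOnInterval_intervalIntegral (c := a) (by simp)
  refine ac_of_dist_le (C := 1) h1 h1 ?_
  have key : ∀ x ∈ Icc a b, ∀ y ∈ Icc a b, x ≤ y → dist (A x) (A y) ≤
      dist (∫ v in a..x, ‖A' v‖) (∫ v in a..y, ‖A' v‖) := by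
    intro x hx y hy hxy
    have i1 : IntervalIntegrable A' volume a x := hi.mono_set (by
      rw [uIcc_of_le hab, uIcc_of_le hx.1]; exact Icc_subset_Icc le_rfl hx.2)
    have i2 : IntervalIntegrable A' volume a y := hi.mono_set (by
      rw [uIcc_of_le hab, uIcc_of_le hy.1]; exact Icc_subset_Icc le_rfl hy.2)
    rw [dist_comm, dist_comm (∫ v in a..x, ‖A' v‖), dist_eq_norm, dist_eq_norm, hA x hx, hA y hy,
      add_sub_add_left_eq_sub, intervalIntegral.integral_interval_sub_left i2 i1,
      intervalIntegral.integral_interval_sub_left i2.norm i1.norm]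
    exact (intervalIntegral.norm_integral_le_integral_norm hxy).trans (le_abs_self _)
  intro x hx y hy
  rw [uIcc_of_le hab] at hx hy
  have hnn : 0 ≤ dist (∫ v in a..x, ‖A' v‖) (∫ v in a..y, ‖A' v‖) := dist_nonneg
  rcases le_total x y with h | h
  · have := key x hx y hy h; linarith
  · have := key y hy x hx h
    rw [dist_comm (A x), dist_comm (∫ v in a..x, ‖A' v‖)] at *
    linarith

theorem ac_inner {A B : ℝ → Hsp} {a b : ℝ} (hA : AbsolutelyContinuousOnInterval A a b)
    (hB : AbsolutelyContinuousOnInterval B a b) :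
    AbsolutelyContinuousOnInterval (fun t => (inner ℝ (A t) (B t) : ℝ)) a b := by
  obtain ⟨C, hC⟩ := hA.exists_bound
  obtain ⟨D, hD⟩ := hB.exists_bound
  have hC0 : 0 ≤ C := (norm_nonneg _).trans (hC a (by simp))
  have hD0 : 0 ≤ D := (norm_nonneg _).trans (hD a (by simp))
  refine ac_of_dist_le (C := C + D) hA hB ?_
  intro x hx y hy
  have e : (inner ℝ (A x) (B x) : ℝ) - inner ℝ (A y) (B y) =
      inner ℝ (A x) (B x - B y) + inner ℝ (A x - A y) (B y) := by
    rw [inner_sub_right, inner_sub_left]; ring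
  rw [Real.dist_eq, e, dist_eq_norm, dist_eq_norm]
  have e1 := abs_real_inner_le_norm (A x) (B x - B y)
  have e2 := abs_real_inner_le_norm (A x - A y) (B y)
  have e3 := abs_add_le (inner ℝ (A x) (B x - B y) : ℝ) (inner ℝ (A x - A y) (B y))
  have e4 : ‖A x‖ * ‖B x - B y‖ ≤ C * ‖B x - B y‖ := by gcongr; exact hC x hx
  have e5 : ‖A x - A y‖ * ‖B y‖ ≤ ‖A x - A y‖ * D := by gcongr; exact hD y hy
  have := norm_nonneg (A x - A y)
  have := norm_nonneg (B x - B y)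
  nlinarith

theorem mono_of_ac {f : ℝ → ℝ} {a b : ℝ} (hab : a ≤ b)
    (hf : AbsolutelyContinuousOnInterval f a b)
    (hd : ∀ᵐ t, t ∈ Ioo a b → ∃ f', HasDerivAt f f' t ∧ 0 ≤ f') : f a ≤ f b := by
  have h := hf.integral_deriv_eq_sub
  have : 0 ≤ ∫ x in a..b, deriv f x := by
    apply intervalIntegral.integral_nonneg_of_ae_restrict hab
    rw [← restrict_Ioo_eq_restrict_Icc]
    rw [Filter.EventuallyLE, ae_restrict_iff' measurableSet_Ioo]
    filter_upwards [hd] with t ht hm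
    obtain ⟨f', h1, h2⟩ := ht hm
    simpa [h1.deriv] using h2
  linarith

theorem ae_deriv_primitive {E : Type*} [NormedAddCommGroup E] [NormedSpace ℝ E] [CompleteSpace E]
    {A A' : ℝ → E} {a b : ℝ} (hab : a ≤ b) (hi : IntervalIntegrable A' volume a b)
    (hA : ∀ t ∈ Icc a b, A t = A a + ∫ s in a..t, A' s) :
    ∀ᵐ t, t ∈ Ioo a b → HasDerivAt A (A' t) t := by
  filter_upwards [hi.ae_hasDerivAt_integral] with t ht hm
  have h1 := ht (by rw [uIcc_of_le hab]; exact Ioo_subset_Icc_self hm) a (by simp)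
  have h2 := h1.const_add (A a)
  refine h2.congr_of_eventuallyEq ?_
  filter_upwards [Ioo_mem_nhds hm.1 hm.2] with s hs
  exact hA s (Ioo_subset_Icc_self hs)

theorem ae_Ioi_iff {τ : ℝ} {p : ℝ → Prop} :
    (∀ᵐ t ∂(volume.restrict (Ioi τ)), p t) ↔ ∀ᵐ t, τ < t → p t := by
  rw [ae_restrict_iff' measurableSet_Ioi]; rfl

/-- derivative a.e. on a half line -/
theorem ae_deriv_halfline {E : Type*} [NormedAddCommGroup E] [NormedSpace ℝ E] [CompleteSpace E]
    {A A' : ℝ → E} {τ : ℝ} (h : ∀ T1 T2 : ℝ, τ < T1 → T1 < T2 →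
      IntervalIntegrable A' volume T1 T2 ∧
      ∀ t ∈ Icc T1 T2, A t = A T1 + ∫ s in T1..t, A' s) :
    ∀ᵐ t, τ < t → HasDerivAt A (A' t) t := by
  have h1 : ∀ n : ℕ, ∀ᵐ t, t ∈ Ioo (τ + 1 / ((n:ℝ) + 2)) (τ + (n:ℝ) + 2) →
      HasDerivAt A (A' t) t := by
    intro n
    have p : (0:ℝ) < 1 / ((n:ℝ) + 2) := by positivity
    have p2 : 1 / ((n:ℝ) + 2) < (n:ℝ) + 2 := by
      have : (0:ℝ) ≤ n := n.cast_nonneg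
      rw [div_lt_iff₀ (by positivity)]; nlinarith
    obtain ⟨q1, q2⟩ := h (τ + 1 / ((n:ℝ) + 2)) (τ + (n:ℝ) + 2) (by linarith) (by linarith)
    exact ae_deriv_primitive (by linarith) q1 q2
  filter_upwards [ae_all_iff.2 h1] with t ht hm
  obtain ⟨n, hn⟩ := exists_nat_gt (max (t - τ) (1 / (t - τ)))
  have hp : 0 < t - τ := by linarith
  have hn1 := (le_max_left _ _).trans_lt hn
  have hn2 := (le_max_right _ _).trans_lt hn
  refine ht n ⟨?_, by linarith⟩
  have : 1 / ((n:ℝ) + 2) < t - τ := by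
    rw [div_lt_iff₀ hp] at hn2
    rw [div_lt_iff₀ (by linarith)]
    nlinarith
  linarith

end aux

section aux
open Filter Topology

instance instFinμ01 : IsFiniteMeasure μ01 := by
  unfold μ01; infer_instance

theorem Hsp_intervalIntegrable (w : Hsp) : IntervalIntegrable w volume 0 1 := by
  have h : Integrable w μ01 := (Lp.memLp w).integrable (by norm_num)
  rw [intervalIntegrable_iff_integrableOn_Ioo_of_le zero_le_one]
  exact h

theorem Hsp_ii (w : Hsp) {a c : ℝ} (ha : 0 ≤ a) (hac : a ≤ c) (hc : c ≤ 1) :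
    IntervalIntegrable w volume a c :=
  (Hsp_intervalIntegrable w).mono_set (by
    rw [uIcc_of_le hac, uIcc_of_le zero_le_one]; exact Icc_subset_Icc ha hc)

theorem ae_μ01_iff {p : ℝ → Prop} : (∀ᵐ x ∂μ01, p x) ↔ ∀ᵐ x, x ∈ Ioo (0:ℝ) 1 → p x := by
  unfold μ01; rw [ae_restrict_iff' measurableSet_Ioo]

theorem integral_μ01 (f : ℝ → ℝ) : ∫ x, f x ∂μ01 = ∫ x in (0:ℝ)..1, f x := by
  unfold μ01
  rw [intervalIntegral.integral_of_le zero_le_one, integral_Ioc_eq_integral_Ioo]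

/-- Nice representatives. -/
structure DRep (v w : Hsp) (vt G : ℝ → ℝ) : Prop where
  cont : ContinuousOn vt (Icc 0 1)
  zero : vt 0 = 0
  one : vt 1 = 0
  ae : ∀ᵐ x ∂μ01, vt x = v x
  der : ∀ x ∈ Ioo (0:ℝ) 1, HasDerivAt vt (G x) x
  acG : AbsolutelyContinuousOnInterval G 0 1
  derG : ∀ᵐ x, x ∈ Ioo (0:ℝ) 1 → HasDerivAt G (w x) x

theorem InDomainA.rep {v w : Hsp} (h : InDomainA v w) : ∃ vt G, DRep v w vt G := by
  obtain ⟨vt, h1, h2, h3, h4, g, h5, h6⟩ := h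
  have hi := Hsp_intervalIntegrable w
  have hh : (1/2:ℝ) ∈ Ioo (0:ℝ) 1 := by constructor <;> norm_num
  have hh' : (1/2:ℝ) ∈ uIcc (0:ℝ) 1 := by
    rw [uIcc_of_le zero_le_one]; exact Ioo_subset_Icc_self hh
  refine ⟨vt, fun x => g (1/2) + ∫ z in (1/2:ℝ)..x, w z, h1, h2, h3, h4, ?_, ?_, ?_⟩
  · intro x hx
    have := h6 x hx (1/2) hh
    rw [← this]
    simpa using h5 x hx
  · have a1 := hi.absolutelyContinuousOnInterval_intervalIntegral hh'
    refine ac_of_dist_le (C := 1) a1 a1 ?_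
    intro x _ y _
    simp only [dist_add_left]
    have : 0 ≤ dist (∫ z in (1/2:ℝ)..x, w z) (∫ z in (1/2:ℝ)..y, w z) := dist_nonneg
    linarith
  · filter_upwards [hi.ae_hasDerivAt_integral] with x hx hm
    have := hx (by rw [uIcc_of_le zero_le_one]; exact Ioo_subset_Icc_self hm) _ hh'
    exact this.const_add _

theorem DRep.contG {v w : Hsp} {vt G} (h : DRep v w vt G) : ContinuousOn G (Icc 0 1) := by
  have := h.acG.continuousOn
  rwa [uIcc_of_le zero_le_one] at this

theorem DRep.ftc {v w : Hsp} {vt G} (h : DRep v w vt G) {x y : ℝ} (hx : 0 ≤ x) (hxy : x ≤ y)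
    (hy : y ≤ 1) : ∫ s in x..y, G s = vt y - vt x := by
  apply intervalIntegral.integral_eq_sub_of_hasDerivAt_of_le hxy
  · exact h.cont.mono (Icc_subset_Icc hx hy)
  · intro z hz; exact h.der z ⟨hx.trans_lt hz.1, hz.2.trans_le hy⟩
  · apply ContinuousOn.intervalIntegrable
    rw [uIcc_of_le hxy]; exact h.contG.mono (Icc_subset_Icc hx hy)

theorem DRep.acv {v w : Hsp} {vt G} (h : DRep v w vt G) :
    AbsolutelyContinuousOnInterval vt 0 1 := by
  refine ac_primitive (A' := G) zero_le_one ?_ ?_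
  · apply ContinuousOn.intervalIntegrable
    rw [uIcc_of_le zero_le_one]; exact h.contG
  · intro t ht
    rw [h.ftc le_rfl ht.1 ht.2]; ring

theorem DRep.bound {v w : Hsp} {vt G} (h : DRep v w vt G) :
    ∃ M, 0 ≤ M ∧ (∀ x ∈ Icc (0:ℝ) 1, |G x| ≤ M) ∧ (∀ x ∈ Icc (0:ℝ) 1, |vt x| ≤ M * x) ∧
      (∀ x ∈ Icc (0:ℝ) 1, |vt x| ≤ M * (1 - x)) := by
  obtain ⟨M, hM⟩ := isCompact_Icc.exists_bound_of_continuousOn h.contG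
  have hb : ∀ x y : ℝ, 0 ≤ x → x ≤ y → y ≤ 1 → |vt y - vt x| ≤ M * (y - x) := by
    intro x y hx hxy hy
    rw [← h.ftc hx hxy hy]
    have := intervalIntegral.norm_integral_le_of_norm_le_const (f := G) (a := x) (b := y) (C := M) ?_
    · rwa [abs_of_nonneg (by linarith : 0 ≤ y - x)] at this
    · intro z hz
      rw [uIoc_of_le hxy] at hz
      exact hM z ⟨hx.trans hz.1.le, hz.2.trans hy⟩
  refine ⟨M, (norm_nonneg _).trans (hM 0 (by simp)), hM, ?_, ?_⟩
  · intro x hx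
    have := hb 0 x le_rfl hx.1 hx.2
    simpa [h.zero] using this
  · intro x hx
    have := hb x 1 hx.1 hx.2 le_rfl
    simpa [h.one] using this

theorem ii_mul {w : ℝ → ℝ} {f : ℝ → ℝ} {a c : ℝ} (hw : IntervalIntegrable w volume a c)
    (hf : ContinuousOn f (uIcc a c)) : IntervalIntegrable (fun x => w x * f x) volume a c :=
  hw.mul_continuousOn hf

theorem poincare {v w : Hsp} (h : InDomainA v w) :
    (inner ℝ w v : ℝ) ≤ - Real.pi ^ 2 * ‖v‖ ^ 2 := by
  obtain ⟨vt, G, R⟩ := h.rep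
  obtain ⟨M, hM0, hMG, hM1, hM2⟩ := R.bound
  set k : ℝ → ℝ := fun x => w x * vt x + Real.pi ^ 2 * vt x ^ 2 with hk
  have hu : uIcc (0:ℝ) 1 = Icc 0 1 := uIcc_of_le zero_le_one
  have hki : IntervalIntegrable k volume 0 1 := by
    refine (ii_mul (Hsp_intervalIntegrable w) (by rw [hu]; exact R.cont)).add ?_
    apply ContinuousOn.intervalIntegrable
    rw [hu]; exact continuousOn_const.mul (R.cont.pow 2)
  have e1 : (inner ℝ w v : ℝ) + Real.pi ^ 2 * ‖v‖ ^ 2 = ∫ x in (0:ℝ)..1, k x := by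
    rw [← real_inner_self_eq_norm_sq, L2.inner_def, L2.inner_def, ← integral_const_mul,
      ← integral_add, integral_μ01]
    · apply intervalIntegral.integral_congr_ae
      have := ae_μ01_iff.1 R.ae
      have h1 : ∀ᵐ x : ℝ, x ≠ 1 := by simp [ae_iff, measure_singleton]
      filter_upwards [this, h1] with x hx hx1 hm
      rw [uIoc_of_le zero_le_one] at hm
      have := hx ⟨hm.1, lt_of_le_of_ne hm.2 hx1⟩
      simp only [hk, this, RCLike.inner_apply]
      simp; ring
    · exact L2.integrable_inner w v
    · exact (L2.integrable_inner v v).const_mul _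
  suffices hs : ∫ x in (0:ℝ)..1, k x ≤ 0 by linarith
  set f : ℝ → ℝ := fun x => vt x * G x - Real.pi * (Real.cos (Real.pi * x) / Real.sin (Real.pi * x)) * vt x ^ 2 with hf
  set K : ℝ → ℝ := fun x => ∫ s in (0:ℝ)..x, k s with hK
  have hKac : AbsolutelyContinuousOnInterval K 0 1 :=
    hki.absolutelyContinuousOnInterval_intervalIntegral (by simp)
  have hspos : ∀ x ∈ Ioo (0:ℝ) 1, 0 < Real.sin (Real.pi * x) := by
    intro x hx
    apply Real.sin_pos_of_pos_of_lt_pi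
    · exact mul_pos Real.pi_pos hx.1
    · nlinarith [Real.pi_pos, hx.2]
  have main : ∀ ε, 0 < ε → ε < 1/2 → f ε - K ε ≤ f (1 - ε) - K (1 - ε) := by
    intro ε h0 h1
    have hle : ε ≤ 1 - ε := by linarith
    have hsub : uIcc ε (1 - ε) ⊆ uIcc 0 1 := by
      rw [hu, uIcc_of_le hle]; exact Icc_subset_Icc h0.le (by linarith)
    have hcot : AbsolutelyContinuousOnInterval
        (fun x => Real.pi * (Real.cos (Real.pi * x) / Real.sin (Real.pi * x))) ε (1 - ε) := by
      apply ContDiffOn.absolutelyContinuousOnInterval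
      rw [uIcc_of_le hle]
      apply ContDiffOn.mul contDiffOn_const
      apply ContDiffOn.div
      · exact (Real.contDiff_cos.comp (contDiff_const.mul contDiff_id)).contDiffOn
      · exact (Real.contDiff_sin.comp (contDiff_const.mul contDiff_id)).contDiffOn
      · intro x hx
        exact (hspos x ⟨h0.trans_le hx.1, by linarith [hx.2]⟩).ne'
    have av := R.acv.mono hsub
    have aG := R.acG.mono hsub
    have aK := hKac.mono hsub
    have aall : AbsolutelyContinuousOnInterval (fun x => f x - K x) ε (1 - ε) := by
      have := ((av.mul aG).sub (hcot.mul (av.mul av))).sub aK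
      have e : (fun x => f x - K x) = (vt * G - (fun x => Real.pi *
          (Real.cos (Real.pi * x) / Real.sin (Real.pi * x))) * (vt * vt)) - K := by
        funext x; simp only [hf, Pi.sub_apply, Pi.mul_apply]; ring
      rw [e]; exact this
    refine mono_of_ac (f := fun x => f x - K x) hle aall ?_
    filter_upwards [R.derG, hki.ae_hasDerivAt_integral] with x hx1 hx2 hm
    have hm' : x ∈ Ioo (0:ℝ) 1 := ⟨h0.trans hm.1, by linarith [hm.2]⟩
    have d1 := R.der x hm'
    have d2 := hx1 hm'
    have d3 := hx2 (by rw [hu]; exact Ioo_subset_Icc_self hm') 0 (by simp)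
    have hsx := hspos x hm'
    have dpi : HasDerivAt (fun y : ℝ => Real.pi * y) Real.pi x := by
      simpa using (hasDerivAt_id x).const_mul Real.pi
    have dc := ((Real.hasDerivAt_cos (Real.pi * x)).comp x dpi).div
      ((Real.hasDerivAt_sin (Real.pi * x)).comp x dpi) hsx.ne'
    have dall := ((d1.mul d2).sub ((dc.const_mul Real.pi).mul (d1.pow 2))).sub d3
    refine ⟨_, dall, ?_⟩
    simp only [hk, Pi.div_apply, Pi.pow_apply, Function.comp_apply]
    set S := Real.sin (Real.pi * x)
    set Co := Real.cos (Real.pi * x)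
    have hSC : S ^ 2 + Co ^ 2 = 1 := Real.sin_sq_add_cos_sq _
    have key : 0 ≤ (G x - Real.pi * (Co / S) * vt x) ^ 2 := sq_nonneg _
    refine key.trans (le_of_eq ?_)
    have hS : S ≠ 0 := hsx.ne'
    simp only [Nat.cast_ofNat]
    field_simp
    ring
  -- bounds
  have fb : ∀ x ∈ Ioo (0:ℝ) 1, ∀ y, 0 < y → 2 * y ≤ Real.sin (Real.pi * x) → |vt x| ≤ M * y →
      |f x| ≤ M ^ 2 * y + Real.pi * M ^ 2 * y := by
    intro x hx y hy hs hv
    have hsx := hspos x hx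
    have b1 : |vt x * G x| ≤ M ^ 2 * y := by
      rw [abs_mul]
      have := hMG x (Ioo_subset_Icc_self hx)
      calc |vt x| * |G x| ≤ (M * y) * M := by gcongr
        _ = _ := by ring
    have b2 : |Real.pi * (Real.cos (Real.pi * x) / Real.sin (Real.pi * x)) * vt x ^ 2| ≤
        Real.pi * M ^ 2 * y := by
      rw [abs_mul, abs_mul, abs_div, abs_of_pos hsx, abs_of_pos Real.pi_pos, abs_pow]
      have hc := Real.abs_cos_le_one (Real.pi * x)
      calc Real.pi * (|Real.cos (Real.pi * x)| / Real.sin (Real.pi * x)) * |vt x| ^ 2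
          ≤ Real.pi * (1 / (2 * y)) * (M * y) ^ 2 := by gcongr
        _ = Real.pi * M ^ 2 * y / 2 := by field_simp
        _ ≤ _ := by
          have : 0 ≤ Real.pi * M ^ 2 * y := by positivity
          linarith
    exact (abs_sub _ _).trans (add_le_add b1 b2)
  have hsin : ∀ x, 0 ≤ x → x ≤ 1/2 → 2 * x ≤ Real.sin (Real.pi * x) := by
    intro x h0 h1
    have := Real.mul_le_sin (x := Real.pi * x) (by positivity) (by nlinarith [Real.pi_pos])
    calc 2 * x = 2 / Real.pi * (Real.pi * x) := by field_simp
      _ ≤ _ := this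
  have main2 : ∀ ε, 0 < ε → ε < 1/2 → K (1 - ε) - K ε ≤ 2 * (M ^ 2 * ε + Real.pi * M ^ 2 * ε) := by
    intro ε h0 h1
    have m1 := main ε h0 h1
    have b1 := fb ε ⟨h0, by linarith⟩ ε h0 (hsin ε h0.le h1.le) (hM1 ε ⟨h0.le, by linarith⟩)
    have b2 := fb (1 - ε) ⟨by linarith, by linarith⟩ ε h0 (by
      have := hsin ε h0.le h1.le
      rwa [show Real.pi * (1 - ε) = Real.pi - Real.pi * ε by ring, Real.sin_pi_sub])
      (by simpa using hM2 (1 - ε) ⟨by linarith, by linarith⟩)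
    have := (abs_le.1 b1).1
    have := (abs_le.1 b2).2
    linarith
  have hKc : ContinuousOn K (Icc 0 1) := by
    have := hKac.continuousOn; rwa [hu] at this
  have l0 : Tendsto (fun ε : ℝ => ε) (𝓝[>] 0) (𝓝[Icc 0 1] 0) := by
    apply tendsto_nhdsWithin_of_tendsto_nhds_of_eventually_within
    · exact tendsto_nhdsWithin_of_tendsto_nhds tendsto_id
    · filter_upwards [Ioo_mem_nhdsGT (show (0:ℝ) < 1/2 by norm_num)] with ε hε
      exact ⟨hε.1.le, by linarith [hε.2]⟩
  have l1 : Tendsto (fun ε : ℝ => 1 - ε) (𝓝[>] 0) (𝓝[Icc 0 1] 1) := by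
    apply tendsto_nhdsWithin_of_tendsto_nhds_of_eventually_within
    · refine tendsto_nhdsWithin_of_tendsto_nhds ?_
      have : Continuous (fun ε : ℝ => 1 - ε) := by fun_prop
      simpa using this.tendsto 0
    · filter_upwards [Ioo_mem_nhdsGT (show (0:ℝ) < 1/2 by norm_num)] with ε hε
      exact ⟨by linarith [hε.2], by linarith [hε.1]⟩
  have t0 := (hKc 0 (by simp)).tendsto.comp l0
  have t1 := (hKc 1 (by simp)).tendsto.comp l1
  have t2 : Tendsto (fun ε : ℝ => 2 * (M ^ 2 * ε + Real.pi * M ^ 2 * ε)) (𝓝[>] 0) (𝓝 0) := by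
    refine tendsto_nhdsWithin_of_tendsto_nhds ?_
    have : Continuous (fun ε : ℝ => 2 * (M ^ 2 * ε + Real.pi * M ^ 2 * ε)) := by fun_prop
    simpa using this.tendsto 0
  have := le_of_tendsto_of_tendsto (t1.sub t0) t2 (by
    filter_upwards [Ioo_mem_nhdsGT (show (0:ℝ) < 1/2 by norm_num)] with ε hε
    exact main2 ε hε.1 hε.2)
  simpa [hK] using this

end aux

section aux
open Filter Topology

theorem ae_interval_of_μ01 {p : ℝ → Prop} (h : ∀ᵐ x ∂μ01, p x) {y x : ℝ}
    (hy : y ∈ Ioo (0:ℝ) 1) (hx : x ∈ Ioo (0:ℝ) 1) : ∀ᵐ z, z ∈ uIoc y x → p z := by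
  filter_upwards [ae_μ01_iff.1 h] with z hz hm
  apply hz
  have := uIoc_subset_uIcc hm
  exact (ordConnected_Ioo.uIcc_subset hy hx) this

theorem InDomainA.sub {v w v' w' : Hsp} (h : InDomainA v w) (h' : InDomainA v' w') :
    InDomainA (v - v') (w - w') := by
  obtain ⟨vt, h1, h2, h3, h4, g, h5, h6⟩ := h
  obtain ⟨vt', k1, k2, k3, k4, g', k5, k6⟩ := h'
  refine ⟨vt - vt', h1.sub k1, by simp [h2, k2], by simp [h3, k3], ?_, g - g', ?_, ?_⟩
  · filter_upwards [h4, k4, Lp.coeFn_sub v v'] with x a1 a2 a3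
    rw [a3]
    show vt x - vt' x = _
    simp only [Pi.sub_apply, a1, a2]
  · intro x hx; exact (h5 x hx).sub (k5 x hx)
  · intro x hx y hy
    have e : ∫ z in y..x, (w - w' : Hsp) z = ∫ z in y..x, (w z - w' z) := by
      apply intervalIntegral.integral_congr_ae
      have := ae_interval_of_μ01 (Lp.coeFn_sub w w') hy hx
      filter_upwards [this] with z hz hm
      simpa using hz hm
    have hs : uIcc y x ⊆ uIcc 0 1 := by
      rw [uIcc_of_le zero_le_one]
      exact (ordConnected_Ioo.uIcc_subset hy hx).trans Ioo_subset_Icc_self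
    rw [e, intervalIntegral.integral_sub ((Hsp_intervalIntegrable w).mono_set hs)
      ((Hsp_intervalIntegrable w').mono_set hs), ← h6 x hx y hy, ← k6 x hx y hy]
    simp only [Pi.sub_apply]; ring

theorem energy {ω : ℝ → ℝ} {ω1 τ : ℝ} (hω : ∀ t, ω t ≤ ω1) {d d' dxx : ℝ → Hsp}
    (hc : ContinuousOn d (Ici τ))
    (hdom : ∀ᵐ t, τ < t → InDomainA (d t) (dxx t))
    (heq : ∀ᵐ t, τ < t → d' t = ω t • d t + dxx t)
    (hf : ∀ T1 T2 : ℝ, τ < T1 → T1 < T2 →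
      IntervalIntegrable d' volume T1 T2 ∧
      ∀ t ∈ Icc T1 T2, d t = d T1 + ∫ s in T1..t, d' s)
    {s t : ℝ} (hs : τ ≤ s) (hst : s ≤ t) :
    Real.exp (2 * (Real.pi ^ 2 - ω1) * t) * ‖d t‖ ^ 2 ≤
      Real.exp (2 * (Real.pi ^ 2 - ω1) * s) * ‖d s‖ ^ 2 := by
  set κ := Real.pi ^ 2 - ω1 with hκ
  have step : ∀ s, τ < s → s ≤ t → Real.exp (2 * κ * t) * ‖d t‖ ^ 2 ≤
      Real.exp (2 * κ * s) * ‖d s‖ ^ 2 := by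
    intro s hs hst
    rcases hst.eq_or_lt with rfl | hlt
    · exact le_rfl
    obtain ⟨q1, q2⟩ := hf s t hs hlt
    have a1 := ac_primitive hst q1 q2
    have a2 := ac_inner a1 a1
    have a3 : AbsolutelyContinuousOnInterval (fun x => - Real.exp (2 * κ * x)) s t := by
      apply ContDiffOn.absolutelyContinuousOnInterval
      exact (Real.contDiff_exp.comp (contDiff_const.mul contDiff_id)).neg.contDiffOn
    have a4 := a3.mul a2
    have := mono_of_ac hst a4 ?_
    · simp only [Pi.mul_apply, real_inner_self_eq_norm_sq] at this
      linarith
    filter_upwards [ae_deriv_primitive hst q1 q2, hdom, heq] with x hx1 hx2 hx3 hm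
    have hx : τ < x := hs.trans hm.1
    have d1 := hx1 hm
    have d2 := d1.inner ℝ d1
    have de : HasDerivAt (fun x => - Real.exp (2 * κ * x)) (-(Real.exp (2 * κ * x) * (2 * κ))) x := by
      have : HasDerivAt (fun y : ℝ => 2 * κ * y) (2 * κ) x := by
        simpa using (hasDerivAt_id x).const_mul (2 * κ)
      exact this.exp.neg
    refine ⟨_, de.mul d2, ?_⟩
    have hp := poincare (hx2 hx)
    rw [real_inner_comm (d x) (d' x)]
    have e : (inner ℝ (d' x) (d x) : ℝ) = ω x * ‖d x‖ ^ 2 + inner ℝ (dxx x) (d x) := by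
      rw [hx3 hx, inner_add_left, real_inner_smul_left, real_inner_self_eq_norm_sq]
    have e2 := real_inner_comm (d' x) (d x)
    have hE := Real.exp_pos (2 * κ * x)
    have hw : ω x * ‖d x‖ ^ 2 ≤ ω1 * ‖d x‖ ^ 2 := by gcongr; exact hω x
    have hle : (inner ℝ (d' x) (d x) : ℝ) ≤ - κ * ‖d x‖ ^ 2 := by rw [e, hκ]; nlinarith
    simp only [real_inner_self_eq_norm_sq, e2] at *
    nlinarith [mul_nonneg hE.le (sub_nonneg.2 hle)]
  rcases hst.eq_or_lt with rfl | hlt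
  · exact le_rfl
  rcases hs.eq_or_lt with rfl | hlt'
  swap
  · exact step s hlt' hst
  have c1 : ContinuousWithinAt (fun s => Real.exp (2 * κ * s) * ‖d s‖ ^ 2) (Ioi τ) τ := by
    apply ContinuousWithinAt.mul
    · fun_prop
    · exact (((hc τ (by simp)).mono Ioi_subset_Ici_self).norm).pow 2
  refine ge_of_tendsto c1.tendsto ?_
  filter_upwards [Ioo_mem_nhdsGT hlt] with s hs
  exact step s hs.1 hs.2.le

theorem linear_decay {b ω : ℝ → ℝ} {ω1 τ : ℝ} (hω : ∀ t, ω t ≤ ω1) {U W : ℝ → Hsp}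
    (hU : IsLinearSolution b ω τ U) (hW : IsLinearSolution b ω τ W)
    {s t : ℝ} (hs : τ ≤ s) (hst : s ≤ t) :
    Real.exp (2 * (Real.pi ^ 2 - ω1) * t) * ‖U t - W t‖ ^ 2 ≤
      Real.exp (2 * (Real.pi ^ 2 - ω1) * s) * ‖U s - W s‖ ^ 2 := by
  obtain ⟨u', uxx, hu⟩ := hU
  obtain ⟨w', wxx, hw⟩ := hW
  refine energy (d := fun t => U t - W t) (d' := fun t => u' t - w' t)
    (dxx := fun t => uxx t - wxx t) hω (hu.cont.sub hw.cont) ?_ ?_ ?_ hs hst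
  · filter_upwards [ae_Ioi_iff.1 hu.dom, ae_Ioi_iff.1 hw.dom] with x h1 h2 hx
    exact (h1 hx).sub (h2 hx)
  · filter_upwards [ae_Ioi_iff.1 hu.eq, ae_Ioi_iff.1 hw.eq] with x h1 h2 hx
    apply Lp.ext
    filter_upwards [h1 hx, h2 hx, Lp.coeFn_sub (u' x) (w' x), Lp.coeFn_sub (U x) (W x),
      Lp.coeFn_sub (uxx x) (wxx x), Lp.coeFn_smul (ω x) (U x - W x),
      Lp.coeFn_add (ω x • (U x - W x)) (uxx x - wxx x)] with y a1 a2 a3 a4 a5 a6 a7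
    rw [a3, a7]
    simp only [Pi.sub_apply, Pi.add_apply, a5, a6, Pi.smul_apply, a4, a1, a2, smul_eq_mul]
    ring
  · intro T1 T2 h1 h2
    obtain ⟨p1, p2⟩ := hu.fund T1 T2 h1 h2
    obtain ⟨q1, q2⟩ := hw.fund T1 T2 h1 h2
    refine ⟨p1.sub q1, ?_⟩
    intro t ht
    have hsub : uIcc T1 t ⊆ uIcc T1 T2 := by
      rw [uIcc_of_le ht.1, uIcc_of_le h2.le]; exact Icc_subset_Icc le_rfl ht.2
    rw [intervalIntegral.integral_sub (p1.mono_set hsub) (q1.mono_set hsub), p2 t ht, q2 t ht]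
    abel

/-- second derivative vanishes on the zero set of a nonnegative function -/
theorem DRep.nonneg {v w : Hsp} {vt G} (R : DRep v w vt G) (hv : ∀ᵐ x ∂μ01, 0 ≤ v x) :
    ∀ x ∈ Icc (0:ℝ) 1, 0 ≤ vt x := by
  have h0 : ∀ x ∈ Ioo (0:ℝ) 1, 0 ≤ vt x := by
    intro x hx
    by_contra hneg
    push Not at hneg
    have hcx : ContinuousAt vt x := R.cont.continuousAt (Icc_mem_nhds hx.1 hx.2)
    have h1 : ∀ᶠ y in 𝓝 x, vt y < 0 ∧ y ∈ Ioo (0:ℝ) 1 :=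
      (hcx.eventually_lt continuousAt_const hneg).and (Ioo_mem_nhds hx.1 hx.2)
    have h2 := ae_μ01_iff.1 (hv.and R.ae)
    have h3 : ∀ᵐ y : ℝ, ¬ (vt y < 0 ∧ y ∈ Ioo (0:ℝ) 1) := by
      filter_upwards [h2] with y hy hy2
      have := hy hy2.2
      linarith [this.1, this.2, hy2.1]
    have h4 : volume {y : ℝ | vt y < 0 ∧ y ∈ Ioo (0:ℝ) 1} = 0 := by
      simpa [ae_iff] using h3
    have := MeasureTheory.Measure.measure_pos_of_mem_nhds volume h1
    exact this.ne' h4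
  intro x hx
  rcases hx.1.eq_or_lt with rfl | h1
  · rw [R.zero]
  rcases hx.2.eq_or_lt with rfl | h2
  · rw [R.one]
  exact h0 x ⟨h1, h2⟩

theorem xx_zero {v w : Hsp} (h : InDomainA v w) (hv : ∀ᵐ x ∂μ01, 0 ≤ v x) :
    ∀ᵐ x ∂μ01, v x = 0 → w x = 0 := by
  obtain ⟨vt, G, R⟩ := h.rep
  have hnn := R.nonneg hv
  set E : Set ℝ := {x | x ∈ Ioo (0:ℝ) 1 ∧ vt x = 0} with hE
  have hG : ∀ x ∈ E, G x = 0 := by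
    intro x hx
    have hmin : IsLocalMin vt x := by
      filter_upwards [Ioo_mem_nhds hx.1.1 hx.1.2] with y hy
      rw [hx.2]; exact hnn y (Ioo_subset_Icc_self hy)
    exact hmin.hasDerivAt_eq_zero (R.der x hx.1)
  have hcount : ∀ᵐ x : ℝ, x ∉ {x ∈ E | 𝓝[E ∩ Ioi x] x = ⊥} :=
    (countable_setOfPred_isolated_right_within (s := E)).ae_notMem volume
  rw [ae_μ01_iff]
  filter_upwards [hcount, R.derG, ae_μ01_iff.1 R.ae] with x h1 h2 h3 hm hv0
  have hxE : x ∈ E := ⟨hm, by rw [h3 hm, hv0]⟩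
  have hne : 𝓝[E ∩ Ioi x] x ≠ ⊥ := fun hb => h1 ⟨hxE, hb⟩
  have d := h2 hm
  have t1 := d.tendsto_slope
  have : (𝓝[E ∩ Ioi x] x).NeBot := ⟨hne⟩
  have hle : 𝓝[E ∩ Ioi x] x ≤ 𝓝[≠] x := nhdsWithin_mono _ (fun y hy => ne_of_gt hy.2)
  have t2 := t1.mono_left hle
  have t3 : Tendsto (slope G x) (𝓝[E ∩ Ioi x] x) (𝓝 0) := by
    apply tendsto_const_nhds.congr'
    filter_upwards [self_mem_nhdsWithin] with y hy
    simp [slope, hG y hy.1, hG x hxE]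
  exact tendsto_nhds_unique t2 t3

/-- time derivative vanishes on the zero set -/
theorem time_zero_aux {u : ℝ → Hsp} {D : Hsp} {t : ℝ} (hd : HasDerivAt u D t)
    {h : ℕ → ℝ} (h0 : Tendsto h atTop (𝓝 0)) (hne : ∀ n, h n ≠ 0) :
    ∃ ns : ℕ → ℕ, ∀ᵐ x ∂μ01, Tendsto (fun i => (h (ns i))⁻¹ * (u (t + h (ns i)) x - u t x)) atTop
      (𝓝 (D x)) := by
  have t1 := hasDerivAt_iff_tendsto_slope_zero.1 hd
  have t2 : Tendsto (fun n => (h n)⁻¹ • (u (t + h n) - u t)) atTop (𝓝 D) := by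
    refine t1.comp (tendsto_nhdsWithin_iff.2 ⟨h0, Eventually.of_forall ?_⟩)
    intro n; exact hne n
  obtain ⟨ns, -, hns⟩ := (tendstoInMeasure_of_tendsto_Lp t2).exists_seq_tendsto_ae
  refine ⟨ns, ?_⟩
  have e1 : ∀ᵐ x ∂μ01, ∀ n, ((h n)⁻¹ • (u (t + h n) - u t) : Hsp) x =
      (h n)⁻¹ * (u (t + h n) x - u t x) := by
    rw [ae_all_iff]
    intro n
    filter_upwards [Lp.coeFn_smul (h n)⁻¹ (u (t + h n) - u t), Lp.coeFn_sub (u (t + h n)) (u t)]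
      with x a1 a2
    rw [a1, Pi.smul_apply, a2, Pi.sub_apply, smul_eq_mul]
  filter_upwards [hns, e1] with x a1 a2
  simpa only [a2] using a1

theorem time_zero {u : ℝ → Hsp} {D : Hsp} {t : ℝ} (hd : HasDerivAt u D t)
    (hnn : ∀ s, ∀ᵐ x ∂μ01, 0 ≤ u s x) : ∀ᵐ x ∂μ01, u t x = 0 → D x = 0 := by
  have hp : ∀ n : ℕ, 0 < 1 / ((n:ℝ) + 1) := fun n => by positivity
  have l0 : Tendsto (fun n : ℕ => 1 / ((n:ℝ) + 1)) atTop (𝓝 0) := tendsto_one_div_add_atTop_nhds_zero_nat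
  obtain ⟨n1, k1⟩ := time_zero_aux hd l0 (fun n => (hp n).ne')
  obtain ⟨n2, k2⟩ := time_zero_aux hd (h := fun n : ℕ => -(1 / ((n:ℝ) + 1)))
    (by simpa using l0.neg) (fun n => neg_ne_zero.2 (hp n).ne')
  have q1 : ∀ᵐ x ∂μ01, ∀ n : ℕ, 0 ≤ u (t + 1 / ((n:ℝ) + 1)) x := ae_all_iff.2 fun n => hnn _
  have q2 : ∀ᵐ x ∂μ01, ∀ n : ℕ, 0 ≤ u (t + -(1 / ((n:ℝ) + 1))) x := ae_all_iff.2 fun n => hnn _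
  filter_upwards [k1, k2, q1, q2] with x a1 a2 a3 a4 h0
  apply le_antisymm
  · refine le_of_tendsto a2 (Eventually.of_forall fun i => ?_)
    rw [h0, sub_zero]
    exact mul_nonpos_of_nonpos_of_nonneg (inv_nonpos.2 (neg_nonpos.2 (hp _).le)) (a4 _)
  · refine ge_of_tendsto a1 (Eventually.of_forall fun i => ?_)
    rw [h0, sub_zero]
    exact mul_nonneg (inv_nonneg.2 (hp _).le) (a3 _)

theorem r_nonneg {b ω : ℝ → ℝ} {τ : ℝ} (hb : ∀ t, 0 ≤ b t) (hω : ∀ t, 0 ≤ ω t)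
    {u r u' uxx : ℝ → Hsp} (h : IsStrongSolutionWith b ω τ u r u' uxx)
    (hnn : ∀ s, ∀ᵐ x ∂μ01, 0 ≤ u s x) : ∀ᵐ t, τ < t → ∀ᵐ x ∂μ01, 0 ≤ r t x := by
  filter_upwards [ae_Ioi_iff.1 h.sel, ae_Ioi_iff.1 h.dom, ae_Ioi_iff.1 h.eq,
    ae_deriv_halfline h.fund] with t a1 a2 a3 a4 ht
  filter_upwards [a1 ht, hnn t, xx_zero (a2 ht) (hnn t), time_zero (a4 ht) hnn,
    Lp.coeFn_add (r t) (uxx t)] with x c1 c2 c3 c4 c5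
  rcases c2.eq_or_lt with h0 | h0
  · rw [a3 ht, c5, Pi.add_apply, c3 h0.symm] at c4
    have := c4 h0.symm
    linarith
  · obtain ⟨y, hy, e⟩ := c1
    rw [heaviside, if_neg h0.not_gt, if_neg h0.ne'] at hy
    rw [e, mem_singleton_iff.1 hy]
    have := mul_nonneg (hω t) c2
    linarith [hb t]

end aux

section aux
open Filter Topology

/-- positive part in `L²` -/
abbrev pp (v : Hsp) : Hsp := Lp.posPart v

theorem pp_ae (v : Hsp) : ∀ᵐ x ∂μ01, pp v x = max (v x) 0 := Lp.coeFn_posPart v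

theorem pp_lip (v w : Hsp) : ‖pp v - pp w‖ ≤ ‖v - w‖ := by
  apply Lp.norm_le_norm_of_ae_le
  filter_upwards [pp_ae v, pp_ae w, Lp.coeFn_sub (pp v) (pp w), Lp.coeFn_sub v w] with x a1 a2 a3 a4
  rw [a3, a4, Pi.sub_apply, Pi.sub_apply, a1, a2]
  exact abs_max_sub_max_le_abs _ _ _

theorem inner_int (v w : Hsp) : (inner ℝ v w : ℝ) = ∫ x, v x * w x ∂μ01 := by
  rw [L2.inner_def]
  apply integral_congr_ae
  filter_upwards with x
  simp [mul_comm]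

theorem inner_nonneg_of_ae {v w : Hsp} (h : ∀ᵐ x ∂μ01, 0 ≤ v x * w x) : (0:ℝ) ≤ inner ℝ v w := by
  rw [inner_int]; exact integral_nonneg_of_ae h

theorem ii_mul_Hsp (v w : Hsp) : Integrable (fun x => v x * w x) μ01 := by
  have := L2.integrable_inner (𝕜 := ℝ) v w
  refine this.congr ?_
  filter_upwards with x
  simp [mul_comm]

theorem inner_pp_self (v : Hsp) : (inner ℝ (pp v) v : ℝ) = ‖pp v‖ ^ 2 := by
  rw [← real_inner_self_eq_norm_sq, inner_int, inner_int]
  apply integral_congr_ae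
  filter_upwards [pp_ae v] with x a1
  rw [a1]
  rcases le_total (v x) 0 with h | h
  · simp [h]
  · simp [h]

theorem pp_bound (v w : Hsp) :
    |‖pp w‖ ^ 2 - ‖pp v‖ ^ 2 - 2 * inner ℝ (pp v) (w - v)| ≤ ‖w - v‖ ^ 2 := by
  have e : ‖pp w‖ ^ 2 - ‖pp v‖ ^ 2 - 2 * inner ℝ (pp v) (w - v) =
      ∫ x, ((pp w x * pp w x - pp v x * pp v x) - 2 * (pp v x * (w - v : Hsp) x)) ∂μ01 := by
    rw [← real_inner_self_eq_norm_sq, ← real_inner_self_eq_norm_sq, inner_int, inner_int,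
      inner_int, integral_sub, integral_sub, integral_const_mul]
    · exact ii_mul_Hsp _ _
    · exact ii_mul_Hsp _ _
    · exact (ii_mul_Hsp _ _).sub (ii_mul_Hsp _ _)
    · exact (ii_mul_Hsp _ _).const_mul 2
  rw [e, ← real_inner_self_eq_norm_sq, inner_int, ← Real.norm_eq_abs]
  refine norm_integral_le_of_norm_le (ii_mul_Hsp _ _) ?_
  filter_upwards [pp_ae v, pp_ae w, Lp.coeFn_sub w v] with x a1 a2 a3
  rw [a1, a2, a3, Pi.sub_apply, Real.norm_eq_abs, abs_le]
  rcases le_total (v x) 0 with h | h <;> rcases le_total (w x) 0 with h' | h' <;>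
    simp only [h, h', max_eq_left, max_eq_right] <;> constructor <;> nlinarith

theorem pp_deriv {d : ℝ → Hsp} {d' : Hsp} {t : ℝ} (hd : HasDerivAt d d' t) :
    HasDerivAt (fun s => ‖pp (d s)‖ ^ 2) (2 * inner ℝ (pp (d t)) d') t := by
  have h1 : HasDerivAt (fun s => 2 * (inner ℝ (pp (d t)) (d s) : ℝ)) (2 * inner ℝ (pp (d t)) d') t := by
    have := (hasDerivAt_const t (pp (d t))).inner ℝ hd
    simpa using this.const_mul 2
  have h2 : HasDerivAt (fun s => ‖pp (d s)‖ ^ 2 - ‖pp (d t)‖ ^ 2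
      - 2 * (inner ℝ (pp (d t)) (d s - d t) : ℝ)) 0 t := by
    rw [hasDerivAt_iff_isLittleO]
    have hO : (fun s => d s - d t) =O[𝓝 t] fun s => s - t := hd.isBigO_sub
    have hO2 : (fun s => ‖d s - d t‖ ^ 2) =o[𝓝 t] fun s => s - t := by
      have q1 : (fun s => ‖d s - d t‖ ^ 2) =O[𝓝 t] fun s => (s - t) ^ 2 := hO.norm_left.pow 2
      refine q1.trans_isLittleO ?_
      have q2 : (fun s : ℝ => (s - t) ^ 2) = fun s => (s - t) * (s - t) := by ext; ring
      rw [q2]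
      have q3 : (fun s : ℝ => s - t) =o[𝓝 t] fun _ => (1:ℝ) := by
        rw [Asymptotics.isLittleO_one_iff]
        have : Tendsto (fun s : ℝ => s - t) (𝓝 t) (𝓝 (t - t)) := (continuous_id.sub continuous_const).tendsto t
        simpa using this
      simpa using q3.mul_isBigO (Asymptotics.isBigO_refl (fun s : ℝ => s - t) (𝓝 t))
    refine Asymptotics.IsBigO.trans_isLittleO ?_ hO2
    apply Asymptotics.IsBigO.of_bound 1
    filter_upwards with s
    have := pp_bound (d t) (d s)
    simp only [sub_self, inner_zero_right, mul_zero, sub_zero, smul_zero, Real.norm_eq_abs, one_mul]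
    rwa [abs_of_nonneg (sq_nonneg ‖d s - d t‖)]
  have h3 := h1.add h2
  rw [add_zero] at h3
  have h4 := h3.add_const (‖pp (d t)‖ ^ 2 - 2 * inner ℝ (pp (d t)) (d t))
  refine h4.congr_of_eventuallyEq (Eventually.of_forall fun s => ?_)
  simp only [Pi.add_apply, inner_sub_right]
  ring

theorem pp_ac {d : ℝ → Hsp} {a b : ℝ} (hd : AbsolutelyContinuousOnInterval d a b) :
    AbsolutelyContinuousOnInterval (fun s => ‖pp (d s)‖ ^ 2) a b := by
  have h1 : AbsolutelyContinuousOnInterval (fun s => pp (d s)) a b := by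
    refine ac_of_dist_le (C := 1) hd hd ?_
    intro x _ y _
    rw [dist_eq_norm, dist_eq_norm]
    linarith [pp_lip (d x) (d y), norm_nonneg (d x - d y)]
  have := ac_inner h1 h1
  simpa only [real_inner_self_eq_norm_sq] using this

theorem pp_dissip {v w : Hsp} (h : InDomainA v w) : (inner ℝ w (pp v) : ℝ) ≤ 0 := by
  obtain ⟨vt, G, R⟩ := h.rep
  have hu : uIcc (0:ℝ) 1 = Icc 0 1 := uIcc_of_le zero_le_one
  set p : ℝ → ℝ := fun x => max (vt x) 0 with hp
  have hpc : ContinuousOn p (Icc 0 1) := ContinuousOn.sup R.cont continuousOn_const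
  have hki : IntervalIntegrable (fun x => w x * p x) volume 0 1 :=
    ii_mul (Hsp_intervalIntegrable w) (by rw [hu]; exact hpc)
  have e1 : (inner ℝ w (pp v) : ℝ) = ∫ x in (0:ℝ)..1, w x * p x := by
    rw [inner_int, ← integral_μ01]
    apply integral_congr_ae
    filter_upwards [pp_ae v, R.ae] with x a1 a2
    simp only [hp]; rw [a1, a2]
  have acp : AbsolutelyContinuousOnInterval p 0 1 := by
    refine ac_of_dist_le (C := 1) R.acv R.acv ?_
    intro x _ y _
    rw [Real.dist_eq, Real.dist_eq]
    have := abs_max_sub_max_le_abs (vt x) (vt y) 0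
    linarith [abs_nonneg (vt x - vt y)]
  have acI := hki.absolutelyContinuousOnInterval_intervalIntegral (c := 0) (by simp)
  have ac := (R.acG.mul acp).sub acI
  have := mono_of_ac zero_le_one ac ?_
  · simp only [Pi.sub_apply, Pi.mul_apply, intervalIntegral.integral_same] at this
    simp only [hp, R.zero, R.one, max_self, mul_zero] at this
    rw [e1]; simp only [hp]; linarith
  filter_upwards [R.derG, acp.ae_differentiableAt, hki.ae_hasDerivAt_integral] with x a1 a2 a3 hm
  have hxm : x ∈ uIcc (0:ℝ) 1 := by rw [hu]; exact Ioo_subset_Icc_self hm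
  have d1 := a1 hm
  have d2 := (a2 hxm).hasDerivAt
  have d3 := a3 hxm 0 (by simp)
  refine ⟨_, (d1.mul d2).sub d3, ?_⟩
  have hvx := R.der x hm
  suffices 0 ≤ G x * deriv p x by linarith
  rcases lt_trichotomy (vt x) 0 with h0 | h0 | h0
  · have : p =ᶠ[𝓝 x] fun _ => 0 := by
      filter_upwards [hvx.continuousAt.eventually_lt continuousAt_const h0] with y hy
      exact max_eq_right hy.le
    rw [this.deriv_eq]; simp
  · have : IsLocalMin p x := by
      filter_upwards with y
      simp [hp, h0]
    rw [this.deriv_eq_zero]; simp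
  · have : p =ᶠ[𝓝 x] vt := by
      filter_upwards [continuousAt_const.eventually_lt hvx.continuousAt h0] with y hy
      exact max_eq_left hy.le
    rw [this.deriv_eq, hvx.deriv]; exact mul_self_nonneg _

end aux

section aux
open Filter Topology

theorem memLp_cont {f : ℝ → ℝ} (hf : Continuous f) : MemLp f 2 μ01 := by
  obtain ⟨C, hC⟩ := isCompact_Icc.exists_bound_of_continuousOn (s := Icc (0:ℝ) 1) hf.continuousOn
  refine MemLp.of_bound hf.aestronglyMeasurable C ?_
  rw [ae_μ01_iff]
  filter_upwards with x hx
  exact hC x (Ioo_subset_Icc_self hx)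

def emb (f : ℝ → ℝ) (hf : Continuous f) : Hsp := (memLp_cont hf).toLp f

theorem emb_ae {f : ℝ → ℝ} (hf : Continuous f) : ∀ᵐ x ∂μ01, emb f hf x = f x :=
  (memLp_cont hf).coeFn_toLp

theorem Hsp_norm_le {v : Hsp} {C : ℝ} (hC : 0 ≤ C) (h : ∀ᵐ x ∂μ01, |v x| ≤ C) : ‖v‖ ≤ C := by
  have := Lp.norm_le_of_ae_bound (f := v) hC (by simpa only [Real.norm_eq_abs] using h)
  have e : measureUnivNNReal μ01 = 1 := by
    simp [measureUnivNNReal, μ01]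
  simpa [e] using this

theorem emb_unif {P1 : ℝ → ℝ → ℝ} (h1 : Continuous (Function.uncurry P1)) (t : ℝ) {ε : ℝ}
    (hε : 0 < ε) : ∀ᶠ s in 𝓝 t, ∀ x ∈ Icc (0:ℝ) 1, |P1 s x - P1 t x| ≤ ε := by
  apply isCompact_Icc.eventually_forall_of_forall_eventually
  intro x hx
  have hc : ContinuousAt (fun z : ℝ × ℝ => |P1 z.1 z.2 - P1 t z.2|) (t, x) := by
    have a1 : Continuous fun z : ℝ × ℝ => P1 z.1 z.2 := h1
    have a2 : Continuous fun z : ℝ × ℝ => P1 t z.2 :=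
      h1.comp (continuous_const.prodMk continuous_snd)
    exact (a1.sub a2).abs.continuousAt
  have := hc.eventually_lt (g := fun _ => ε) continuousAt_const (by simpa using hε)
  filter_upwards [this] with z hz using hz.le

theorem emb_cont {P1 : ℝ → ℝ → ℝ} (h1 : Continuous (Function.uncurry P1))
    (hP1 : ∀ t, Continuous (P1 t)) : Continuous fun t => emb (P1 t) (hP1 t) := by
  rw [continuous_iff_continuousAt]
  intro t
  rw [Metric.continuousAt_iff']
  intro ε hε
  filter_upwards [emb_unif h1 t (half_pos hε)] with s hs
  rw [dist_eq_norm]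
  refine lt_of_le_of_lt (Hsp_norm_le (half_pos hε).le ?_) (half_lt_self hε)
  have a := Lp.coeFn_sub (emb (P1 s) (hP1 s)) (emb (P1 t) (hP1 t))
  filter_upwards [a, emb_ae (hP1 s), emb_ae (hP1 t), ae_μ01_iff.2 (Eventually.of_forall fun x hx => hx)]
    with x a1 a2 a3 a4
  rw [a1, Pi.sub_apply, a2, a3]
  exact hs x (Ioo_subset_Icc_self a4)

theorem emb_deriv {P P1 : ℝ → ℝ → ℝ} (h1 : Continuous (Function.uncurry P1))
    (hP : ∀ t, Continuous (P t)) (hP1 : ∀ t, Continuous (P1 t))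
    (hd : ∀ t x, HasDerivAt (fun t => P t x) (P1 t x) t) (t : ℝ) :
    HasDerivAt (fun t => emb (P t) (hP t)) (emb (P1 t) (hP1 t)) t := by
  rw [hasDerivAt_iff_isLittleO, Asymptotics.isLittleO_iff]
  intro ε hε
  obtain ⟨δ, hδ, hball⟩ := Metric.eventually_nhds_iff_ball.1 (emb_unif h1 t hε)
  filter_upwards [Metric.ball_mem_nhds t hδ] with s hs
  refine Hsp_norm_le (by positivity) ?_
  have a := Lp.coeFn_sub (emb (P s) (hP s) - emb (P t) (hP t)) ((s - t) • emb (P1 t) (hP1 t))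
  have a' := Lp.coeFn_sub (emb (P s) (hP s)) (emb (P t) (hP t))
  have a'' := Lp.coeFn_smul (s - t) (emb (P1 t) (hP1 t))
  filter_upwards [a, a', a'', emb_ae (hP s), emb_ae (hP t), emb_ae (hP1 t),
    ae_μ01_iff.2 (Eventually.of_forall fun x hx => hx)] with x b1 b2 b3 b4 b5 b6 b7
  rw [b1, Pi.sub_apply, b2, b3, Pi.sub_apply, Pi.smul_apply, b4, b5, b6]
  have := (convex_ball t δ).norm_image_sub_le_of_norm_hasDerivWithin_le
    (f := fun σ => P σ x - σ * P1 t x) (f' := fun σ => P1 σ x - P1 t x) (C := ε) (x := t) (y := s)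
    ?_ ?_ (Metric.mem_ball_self hδ) hs
  · have e : P s x - P t x - (s - t) • P1 t x = P s x - s * P1 t x - (P t x - t * P1 t x) := by
      rw [smul_eq_mul]; ring
    rw [e]; exact this
  · intro σ _
    have := (hd σ x).sub ((hasDerivAt_id σ).mul_const (P1 t x))
    rw [one_mul] at this
    exact this.hasDerivWithinAt
  · intro σ hσ
    exact hball σ hσ x (Ioo_subset_Icc_self b7)

theorem emb_ac {P P1 : ℝ → ℝ → ℝ} (h1 : Continuous (Function.uncurry P1))
    (hP : ∀ t, Continuous (P t)) (hP1 : ∀ t, Continuous (P1 t))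
    (hd : ∀ t x, HasDerivAt (fun t => P t x) (P1 t x) t) {a b : ℝ} (hab : a ≤ b) :
    AbsolutelyContinuousOnInterval (fun t => emb (P t) (hP t)) a b := by
  have hi : ∀ c d, IntervalIntegrable (fun t => emb (P1 t) (hP1 t)) volume c d :=
    fun c d => (emb_cont h1 hP1).intervalIntegrable c d
  refine ac_primitive hab (hi a b) ?_
  intro t ht
  rw [intervalIntegral.integral_eq_sub_of_hasDerivAt (fun x _ => emb_deriv h1 hP hP1 hd x) (hi a t)]
  abel

theorem emb_dom {p p1 p2 : ℝ → ℝ} (hp : Continuous p) (hp2 : Continuous p2)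
    (d1 : ∀ x, HasDerivAt p (p1 x) x) (d2 : ∀ x, HasDerivAt p1 (p2 x) x)
    (h0 : p 0 = 0) (h1 : p 1 = 0) : InDomainA (emb p hp) (emb p2 hp2) := by
  refine ⟨p, hp.continuousOn, h0, h1, ?_, p1, fun x _ => d1 x, ?_⟩
  · filter_upwards [emb_ae hp] with x hx using hx.symm
  · intro x hx y hy
    have e : ∫ z in y..x, emb p2 hp2 z = ∫ z in y..x, p2 z := by
      apply intervalIntegral.integral_congr_ae
      exact ae_interval_of_μ01 (emb_ae hp2) hy hx
    rw [e, intervalIntegral.integral_eq_sub_of_hasDerivAt (fun x _ => d2 x)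
      (hp2.intervalIntegrable _ _)]

/-- comparison with a subsolution -/
theorem compare {b ω : ℝ → ℝ} {τ : ℝ} (hb : ∀ t, 0 ≤ b t) (hω : ∀ t, 0 ≤ ω t)
    {u r u' uxx : ℝ → Hsp} (h : IsStrongSolutionWith b ω τ u r u' uxx)
    (hnn : ∀ s, ∀ᵐ x ∂μ01, 0 ≤ u s x)
    {P P1 X1 X2 : ℝ → ℝ → ℝ} (h1 : Continuous (Function.uncurry P1))
    (hP : ∀ t, Continuous (P t)) (hP1 : ∀ t, Continuous (P1 t)) (hX2 : ∀ t, Continuous (X2 t))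
    (hd : ∀ t x, HasDerivAt (fun t => P t x) (P1 t x) t)
    (dx1 : ∀ t x, HasDerivAt (P t) (X1 t x) x) (dx2 : ∀ t x, HasDerivAt (X1 t) (X2 t x) x)
    {s T : ℝ} (hs : τ < s) (hsT : s < T)
    (hP0 : ∀ t ∈ Ioo s T, P t 0 = 0) (hP01 : ∀ t ∈ Ioo s T, P t 1 = 0)
    (hsub : ∀ t x, P1 t x ≤ X2 t x)
    (hini : ∀ᵐ x ∂μ01, P s x ≤ u s x) : ∀ᵐ x ∂μ01, P T x ≤ u T x := by
  obtain ⟨q1, q2⟩ := h.fund s T hs hsT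
  set p : ℝ → Hsp := fun t => emb (P t) (hP t) with hp
  have acu := ac_primitive hsT.le q1 q2
  have acd := (emb_ac h1 hP hP1 hd hsT.le).sub acu
  have acf := (pp_ac acd).neg
  have key := mono_of_ac hsT.le acf ?_
  · have z0 : pp (p s - u s) = 0 := by
      apply Lp.ext
      filter_upwards [pp_ae (p s - u s), Lp.coeFn_sub (p s) (u s), emb_ae (hP s), hini,
        Lp.coeFn_zero ℝ 2 μ01] with x a1 a2 a3 a4 a5
      rw [a1, a2, a5, Pi.sub_apply, a3, Pi.zero_apply]
      exact max_eq_right (by linarith)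
    have key' : ‖pp (p T - u T)‖ ^ 2 ≤ ‖pp (p s - u s)‖ ^ 2 := by
      have : -‖pp (p s - u s)‖ ^ 2 ≤ -‖pp (p T - u T)‖ ^ 2 := key
      linarith
    rw [z0, norm_zero] at key'
    have z1 : pp (p T - u T) = 0 := by
      rw [← norm_eq_zero]
      have := sq_nonneg ‖pp (p T - u T)‖
      have h3 : ‖pp (p T - u T)‖ ^ 2 = 0 := by
        apply le_antisymm _ this
        simpa using key'
      exact pow_eq_zero_iff (two_ne_zero) |>.1 h3
    have z2 := pp_ae (p T - u T)
    rw [z1] at z2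
    filter_upwards [z2, Lp.coeFn_sub (p T) (u T), emb_ae (hP T), Lp.coeFn_zero ℝ 2 μ01]
      with x a1 a2 a3 a4
    rw [a2, a4, Pi.sub_apply, a3, Pi.zero_apply] at a1
    have := le_max_left (P T x - u T x) 0
    linarith
  filter_upwards [ae_deriv_primitive hsT.le q1 q2, ae_Ioi_iff.1 h.dom, ae_Ioi_iff.1 h.eq,
    r_nonneg hb hω h hnn] with t a1 a2 a3 a4 ht
  have hτ : τ < t := hs.trans ht.1
  have d1 := (emb_deriv h1 hP hP1 hd t).sub (a1 ht)
  have d2 := (pp_deriv d1).neg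
  refine ⟨_, d2, ?_⟩
  have hdom := pp_dissip ((emb_dom (hP t) (hX2 t) (dx1 t) (dx2 t) (hP0 t ht) (hP01 t ht)).sub (a2 hτ))
  have e : emb (P1 t) (hP1 t) - u' t = (emb (X2 t) (hX2 t) - uxx t) -
      (emb (X2 t) (hX2 t) - emb (P1 t) (hP1 t) + r t) := by
    rw [a3 hτ]; abel
  have hn : (0:ℝ) ≤ inner ℝ (pp (emb (P t) (hP t) - u t))
      (emb (X2 t) (hX2 t) - emb (P1 t) (hP1 t) + r t) := by
    apply inner_nonneg_of_ae
    filter_upwards [pp_ae (emb (P t) (hP t) - u t), a4 hτ, emb_ae (hX2 t), emb_ae (hP1 t),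
      Lp.coeFn_sub (emb (X2 t) (hX2 t)) (emb (P1 t) (hP1 t)),
      Lp.coeFn_add (emb (X2 t) (hX2 t) - emb (P1 t) (hP1 t)) (r t)] with x c1 c2 c3 c4 c5 c6
    rw [c1, c6, Pi.add_apply, c5, Pi.sub_apply, c3, c4]
    apply mul_nonneg (le_max_right _ _)
    linarith [hsub t x]
  rw [real_inner_comm] at hdom
  have e3 : (inner ℝ (pp (emb (P t) (hP t) - u t)) (emb (P1 t) (hP1 t) - u' t) : ℝ) ≤ 0 := by
    rw [e, inner_sub_right]; linarith
  show 0 ≤ -(2 * (inner ℝ (pp (emb (P t) (hP t) - u t)) (emb (P1 t) (hP1 t) - u' t) : ℝ))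
  linarith

end aux

section aux
open Filter Topology

theorem pow_pos_deriv (n : ℕ) (z : ℝ) :
    HasDerivAt (fun z : ℝ => (max z 0) ^ (n + 2)) ((n + 2 : ℝ) * (max z 0) ^ (n + 1)) z := by
  rcases lt_trichotomy z 0 with h | h | h
  · have e : (fun z : ℝ => (max z 0) ^ (n + 2)) =ᶠ[𝓝 z] fun _ => 0 := by
      filter_upwards [Iio_mem_nhds h] with y hy
      rw [max_eq_right (le_of_lt hy)]; simp
    rw [max_eq_right h.le]
    simpa using (hasDerivAt_const z (0:ℝ)).congr_of_eventuallyEq e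
  · subst h
    rw [hasDerivAt_iff_isLittleO]
    simp only [max_self, ne_eq, Nat.add_eq_zero_iff, OfNat.ofNat_ne_zero, and_false,
      not_false_eq_true, zero_pow, sub_zero, one_ne_zero, mul_zero, smul_zero]
    refine Asymptotics.IsBigO.trans_isLittleO ?_
      (Asymptotics.isLittleO_pow_id (𝕜 := ℝ) (n := n + 2) (by omega))
    apply Asymptotics.IsBigO.of_bound 1
    filter_upwards with y
    rw [one_mul, norm_pow, norm_pow]
    gcongr
    rw [Real.norm_eq_abs, Real.norm_eq_abs, abs_of_nonneg (le_max_right _ _)]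
    exact max_le (le_abs_self _) (abs_nonneg _)
  · have e : (fun z : ℝ => (max z 0) ^ (n + 2)) =ᶠ[𝓝 z] fun z => z ^ (n + 2) := by
      filter_upwards [Ioi_mem_nhds h] with y hy
      rw [max_eq_left (le_of_lt hy)]
    rw [max_eq_left h.le]
    have := (hasDerivAt_pow (n + 2) z).congr_of_eventuallyEq e
    simpa using this

theorem sub_alg {K L ρ A y v : ℝ} (hA : 0 < A) (hρ : 0 < ρ) (hK : K * (96 * ρ) = L ^ 2)
    (hL : 6 * y * v + 30 ≤ L) (hy : y ^ 2 = ρ - A) :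
    -K * A ^ 3 + 3 * A ^ 2 * (2 * y * v) ≤ 6 * A * (4 * y ^ 2) - 2 * (3 * A ^ 2) := by
  have h1 : 0 ≤ K * A ^ 2 - L * A + 24 * ρ := by
    have : 0 ≤ (K * A ^ 2 - L * A + 24 * ρ) * (96 * ρ) := by
      have : (K * A ^ 2 - L * A + 24 * ρ) * (96 * ρ) = (L * A - 48 * ρ) ^ 2 := by
        linear_combination A ^ 2 * hK
      rw [this]; positivity
    exact nonneg_of_mul_nonneg_left this (by positivity)
  have h2 : A ^ 2 * (6 * y * v + 30) ≤ A ^ 2 * L := by gcongr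
  have h3 := mul_nonneg hA.le h1
  rw [hy]
  nlinarith

theorem spread {b ω : ℝ → ℝ} {τ : ℝ} (hb : ∀ t, 0 ≤ b t) (hω : ∀ t, 0 ≤ ω t)
    {u r u' uxx : ℝ → Hsp} (h : IsStrongSolutionWith b ω τ u r u' uxx)
    (hnn : ∀ s, ∀ᵐ x ∂μ01, 0 ≤ u s x) {s T : ℝ} (hs : τ < s) (hsT : s < T)
    {x0 x1 e c : ℝ} (he : 0 < e) (he1 : e ≤ 1) (hc : 0 < c) (a0 : e ≤ x0) (a1 : x0 ≤ 1 - e)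
    (b0 : e ≤ x1) (b1 : x1 ≤ 1 - e) (hini : ∀ᵐ x ∂μ01, |x - x0| < e → c ≤ u s x) :
    ∀ᵐ x ∂μ01, |x - x1| < e → 0 < u T x := by
  set v : ℝ := (x1 - x0) / (T - s) with hv
  have hTs : 0 < T - s := by linarith
  set ρ : ℝ := e ^ 2 with hρ
  have hρ0 : 0 < ρ := by positivity
  set L : ℝ := 6 * |v| + 30 with hL
  set K : ℝ := L ^ 2 / (96 * ρ) with hK
  have hK' : K * (96 * ρ) = L ^ 2 := by rw [hK]; field_simp
  set Y : ℝ → ℝ → ℝ := fun t x => x - (x0 + (t - s) * v) with hY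
  set a : ℝ → ℝ → ℝ := fun t x => ρ - (Y t x) ^ 2 with ha
  set E : ℝ → ℝ := fun t => c * Real.exp (-K * (t - s)) with hE
  have hE0 : ∀ t, 0 < E t := fun t => by simp only [hE]; positivity
  have hYc : Continuous (Function.uncurry Y) := by
    have : Continuous fun z : ℝ × ℝ => z.2 - (x0 + (z.1 - s) * v) := by fun_prop
    exact this
  have hac : Continuous (Function.uncurry a) := continuous_const.sub (hYc.pow 2)
  have hmc : Continuous fun z : ℝ × ℝ => max (a z.1 z.2) 0 := Continuous.sup hac continuous_const
  have hEc : Continuous E := by simp only [hE]; fun_prop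
  have hEc' : Continuous fun z : ℝ × ℝ => E z.1 := hEc.comp continuous_fst
  set P : ℝ → ℝ → ℝ := fun t x => E t * (max (a t x) 0) ^ 3 with hP
  set P1 : ℝ → ℝ → ℝ := fun t x =>
    E t * (-K * (max (a t x) 0) ^ 3 + 3 * (max (a t x) 0) ^ 2 * (2 * Y t x * v)) with hP1
  set X1 : ℝ → ℝ → ℝ := fun t x => E t * (3 * (max (a t x) 0) ^ 2 * (-(2 * Y t x))) with hX1
  set X2 : ℝ → ℝ → ℝ := fun t x =>
    E t * (6 * (max (a t x) 0) * (4 * Y t x ^ 2) - 2 * (3 * (max (a t x) 0) ^ 2)) with hX2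
  have hYc' : Continuous fun z : ℝ × ℝ => Y z.1 z.2 := hYc
  have cP : Continuous (Function.uncurry P) := hEc'.mul (hmc.pow 3)
  have cP1 : Continuous (Function.uncurry P1) := hEc'.mul ((continuous_const.mul (hmc.pow 3)).add
    ((continuous_const.mul (hmc.pow 2)).mul ((continuous_const.mul hYc').mul continuous_const)))
  have cX2 : Continuous (Function.uncurry X2) := hEc'.mul
    (((continuous_const.mul hmc).mul (continuous_const.mul (hYc'.pow 2))).sub
      (continuous_const.mul (continuous_const.mul (hmc.pow 2))))
  have sec : ∀ {F : ℝ → ℝ → ℝ}, Continuous (Function.uncurry F) → ∀ t, Continuous (F t) :=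
    fun hF t => hF.comp (continuous_const.prodMk continuous_id)
  have f3 : ∀ z : ℝ, HasDerivAt (fun z : ℝ => (max z 0) ^ 3) (3 * (max z 0) ^ 2) z := by
    intro z; have := pow_pos_deriv 1 z; norm_num at this; exact this
  have f2 : ∀ z : ℝ, HasDerivAt (fun z : ℝ => (max z 0) ^ 2) (2 * (max z 0)) z := by
    intro z; have := pow_pos_deriv 0 z; norm_num at this; exact this
  have dYt : ∀ t x, HasDerivAt (fun t => Y t x) (-v) t := by
    intro t x
    have := ((((hasDerivAt_id t).sub_const s).mul_const v).const_add x0).const_sub x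
    simpa using this
  have dYx : ∀ t x, HasDerivAt (Y t) 1 x := fun t x => (hasDerivAt_id x).sub_const _
  have dat : ∀ t x, HasDerivAt (fun t => a t x) (2 * Y t x * v) t := by
    intro t x
    have := ((dYt t x).pow 2).const_sub ρ
    refine this.congr_deriv ?_
    push_cast; ring
  have dax : ∀ t x, HasDerivAt (a t) (-(2 * Y t x)) x := by
    intro t x
    have := ((dYx t x).pow 2).const_sub ρ
    refine this.congr_deriv ?_
    push_cast; ring
  have dE : ∀ t, HasDerivAt E (-K * E t) t := by
    intro t
    have h1 : HasDerivAt (fun t => -K * (t - s)) (-K) t := by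
      simpa using ((hasDerivAt_id t).sub_const s).const_mul (-K)
    refine (h1.exp.const_mul c).congr_deriv ?_
    simp only [hE]; ring
  have dt : ∀ t x, HasDerivAt (fun t => P t x) (P1 t x) t := by
    intro t x
    have q := (f3 (a t x)).comp t (dat t x)
    refine ((dE t).mul q).congr_deriv ?_
    simp only [hP1, Function.comp]; ring
  have d1 : ∀ t x, HasDerivAt (P t) (X1 t x) x := by
    intro t x
    have q := (f3 (a t x)).comp x (dax t x)
    exact q.const_mul (E t)
  have d2 : ∀ t x, HasDerivAt (X1 t) (X2 t x) x := by
    intro t x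
    have q := ((f2 (a t x)).comp x (dax t x)).const_mul 3
    have q2 := ((dYx t x).const_mul 2).neg
    refine ((q.mul q2).const_mul (E t)).congr_deriv ?_
    simp only [hX2, Function.comp, Pi.neg_apply]; ring
  have hm : ∀ t ∈ Ioo s T, e ≤ x0 + (t - s) * v ∧ x0 + (t - s) * v ≤ 1 - e := by
    intro t ht
    obtain ⟨l, hl0, hl1, hl⟩ : ∃ l : ℝ, 0 ≤ l ∧ l ≤ 1 ∧ (t - s) * v = l * (x1 - x0) := by
      refine ⟨(t - s) / (T - s), ?_, ?_, ?_⟩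
      · exact div_nonneg (by linarith [ht.1]) hTs.le
      · rw [div_le_one hTs]; linarith [ht.2]
      · rw [hv]; ring
    rw [hl]
    constructor <;> nlinarith
  have zero_of : ∀ t x, a t x ≤ 0 → P t x = 0 := by
    intro t x hx; simp only [hP]; rw [max_eq_right hx]; simp
  have Tm : x0 + (T - s) * v = x1 := by rw [hv]; field_simp; ring
  have key := compare hb hω h hnn cP1 (sec cP) (sec cP1) (sec cX2) dt d1 d2 hs hsT ?_ ?_ ?_ ?_
  · filter_upwards [key] with x hx hx1
    refine lt_of_lt_of_le ?_ hx
    have : 0 < a T x := by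
      simp only [ha, hY, Tm, hρ]
      have := sq_lt_sq' (abs_lt.1 hx1).1 (abs_lt.1 hx1).2
      linarith
    simp only [hP]
    rw [max_eq_left this.le]
    have := hE0 T
    positivity
  · intro t ht
    apply zero_of
    obtain ⟨k1, k2⟩ := hm t ht
    simp only [ha, hY, hρ]
    nlinarith
  · intro t ht
    apply zero_of
    obtain ⟨k1, k2⟩ := hm t ht
    simp only [ha, hY, hρ]
    nlinarith
  · intro t x
    simp only [hP1, hX2]
    apply mul_le_mul_of_nonneg_left _ (hE0 t).le
    rcases le_or_gt (a t x) 0 with hle | hlt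
    · rw [max_eq_right hle]; simp
    · rw [max_eq_left hlt.le]
      refine sub_alg hlt hρ0 hK' ?_ (by simp only [ha]; ring)
      have hy1 : Y t x ^ 2 ≤ 1 := by
        have : Y t x ^ 2 < ρ := by simp only [ha] at hlt; linarith
        have : ρ ≤ 1 := by rw [hρ]; nlinarith
        linarith
      have hy2 : |Y t x| ≤ 1 := by rwa [← sq_le_one_iff_abs_le_one]
      have : Y t x * v ≤ |v| := by
        calc Y t x * v ≤ |Y t x * v| := le_abs_self _
          _ = |Y t x| * |v| := abs_mul _ _
          _ ≤ 1 * |v| := by gcongr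
          _ = |v| := one_mul _
      rw [hL]; linarith
  · filter_upwards [hini, hnn s] with x hx hx0
    rcases le_or_gt (a s x) 0 with hle | hlt
    · rw [zero_of s x hle]; exact hx0
    · have e1 : a s x = e ^ 2 - (x - x0) ^ 2 := by simp [ha, hY, hρ]
      have : |x - x0| < e := by
        apply abs_lt_of_sq_lt_sq _ he.le
        linarith
      refine le_trans ?_ (hx this)
      simp only [hP]
      rw [max_eq_left hlt.le]
      have e2 : E s = c := by simp [hE]
      rw [e2]
      have : a s x ≤ 1 := by rw [e1]; nlinarith [sq_nonneg (x - x0)]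
      have : a s x ^ 3 ≤ 1 := pow_le_one₀ hlt.le this
      nlinarith

theorem pos_after {b ω : ℝ → ℝ} {τ : ℝ} (hb : ∀ t, 0 ≤ b t) (hω : ∀ t, 0 ≤ ω t)
    {u r u' uxx : ℝ → Hsp} (h : IsStrongSolutionWith b ω τ u r u' uxx)
    (hnn : ∀ s, ∀ᵐ x ∂μ01, 0 ≤ u s x) {s T : ℝ} (hs : τ < s) (hsT : s < T)
    (hne : u s ≠ 0) : ∀ᵐ x ∂μ01, 0 < u T x := by
  -- a good time
  obtain ⟨s', hs', hne', hdom⟩ : ∃ s' ∈ Ioo s T, u s' ≠ 0 ∧ InDomainA (u s') (uxx s') := by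
    have hc : ContinuousAt u s := h.cont.continuousAt (Ici_mem_nhds hs)
    have h1 : ∀ᶠ y in 𝓝 s, u y ≠ 0 := hc.eventually_ne hne
    obtain ⟨δ, hδ, hball⟩ := Metric.eventually_nhds_iff_ball.1 h1
    have hd := ae_Ioi_iff.1 h.dom
    have hdense := Measure.dense_of_ae hd
    obtain ⟨y, hy1, hy2⟩ := hdense.exists_mem_open (isOpen_Ioo (a := s) (b := min T (s + δ)))
      (nonempty_Ioo.2 (lt_min hsT (by linarith)))
    refine ⟨y, ⟨hy2.1, hy2.2.trans_le (min_le_left _ _)⟩, hball y ?_, hy1 (hs.trans hy2.1)⟩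
    rw [Metric.mem_ball, Real.dist_eq, abs_lt]
    have := hy2.2.trans_le (min_le_right _ _)
    constructor <;> linarith [hy2.1]
  obtain ⟨vt, G, R⟩ := hdom.rep
  have hvnn := R.nonneg (hnn s')
  obtain ⟨x0, hx0, hv0⟩ : ∃ x0 ∈ Ioo (0:ℝ) 1, 0 < vt x0 := by
    by_contra hcon
    push Not at hcon
    apply hne'
    apply Lp.ext
    filter_upwards [R.ae, Lp.coeFn_zero ℝ 2 μ01, ae_μ01_iff.2 (Eventually.of_forall fun x hx => hx)]
      with x a1 a2 a3
    rw [← a1, a2, Pi.zero_apply]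
    exact le_antisymm (hcon x a3) (hvnn x (Ioo_subset_Icc_self a3))
  have hcx : ContinuousAt vt x0 := R.cont.continuousAt (Icc_mem_nhds hx0.1 hx0.2)
  have hev : ∀ᶠ y in 𝓝 x0, vt x0 / 2 < vt y := continuousAt_const.eventually_lt hcx (by linarith)
  obtain ⟨δ, hδ, hball⟩ := Metric.eventually_nhds_iff_ball.1 hev
  have loc : ∀ x1 ∈ Ioo (0:ℝ) 1, ∃ e, 0 < e ∧ ∀ᵐ x ∂μ01, |x - x1| < e → 0 < u T x := by
    intro x1 hx1
    set e := min δ (min (min x0 (1 - x0)) (min x1 (1 - x1))) with he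
    have g0 : 0 < e := by
      simp only [he, lt_min_iff, sub_pos]; exact ⟨hδ, ⟨hx0.1, hx0.2⟩, hx1.1, hx1.2⟩
    have ⟨g1, ⟨g2, g3⟩, g4, g5⟩ : e ≤ δ ∧ (e ≤ x0 ∧ e ≤ 1 - x0) ∧ e ≤ x1 ∧ e ≤ 1 - x1 := by
      simpa only [le_min_iff] using he.le
    refine ⟨e, g0, spread hb hω h hnn (hs.trans hs'.1) hs'.2 g0 (by linarith [hx0.2])
      (half_pos hv0) g2 (by linarith) g4 (by linarith) ?_⟩
    filter_upwards [R.ae] with x a1 a2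
    rw [← a1]
    exact (hball x (by rw [Metric.mem_ball, Real.dist_eq]; linarith)).le
  rw [ae_μ01_iff]
  have hN : volume {x : ℝ | x ∈ Ioo (0:ℝ) 1 ∧ ¬ 0 < u T x} = 0 := by
    apply measure_null_of_locally_null
    intro x1 hx1
    obtain ⟨e, he, hae⟩ := loc x1 hx1.1
    refine ⟨{x : ℝ | x ∈ Ioo (0:ℝ) 1 ∧ ¬ 0 < u T x} ∩ Metric.ball x1 e,
      inter_mem_nhdsWithin _ (Metric.ball_mem_nhds x1 he), ?_⟩
    rw [ae_μ01_iff, ae_iff] at hae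
    refine measure_mono_null ?_ hae
    intro x hx
    simp only [mem_ofPred_eq]
    intro hcon
    exact hx.1.2 (hcon hx.1.1 hx.2)
  rw [ae_iff]
  convert hN using 2
  ext x
  simp [and_assoc]

end aux

section aux
open Filter Topology

theorem linear_of_pos {b ω : ℝ → ℝ} {τ : ℝ} {u : ℝ → Hsp} (h : IsStrongSolution b ω τ u)
    (hp : ∀ t, τ < t → ∀ᵐ x ∂μ01, 0 < u t x) : IsLinearSolution b ω τ u := by
  obtain ⟨r, u', uxx, h⟩ := h
  refine ⟨u', uxx, h.cont, h.dom, ?_, h.fund⟩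
  rw [ae_Ioi_iff]
  filter_upwards [ae_Ioi_iff.1 h.sel, ae_Ioi_iff.1 h.eq] with t a1 a2 ht
  filter_upwards [a1 ht, hp t ht, Lp.coeFn_add (r t) (uxx t)] with x c1 c2 c3
  obtain ⟨y, hy, e⟩ := c1
  rw [heaviside, if_neg c2.not_gt, if_neg c2.ne'] at hy
  rw [a2 ht, c3, Pi.add_apply, e, mem_singleton_iff.1 hy, mul_one]

theorem IsPositive.ae_pos {v : Hsp} (h : IsPositive v) : ∀ᵐ x ∂μ01, 0 < v x := by
  obtain ⟨vt, -, h2, h3⟩ := h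
  filter_upwards [h2, ae_μ01_iff.2 (Eventually.of_forall fun x hx => hx)] with x a1 a2
  rw [← a1]; exact h3 x a2

theorem main_aux
    (b ω : ℝ → ℝ) (b0 b1 ω0 ω1 : ℝ) (hC : Cond1 b ω b0 b1 ω0 ω1)
    (hω1 : ω1 < Real.pi ^ 2)
    (ξ : ℝ → Hsp)
    (hξtraj : IsCompleteTrajectory b ω ξ) (hξbdd : BddTraj ξ)
    (hξpos : ∀ t : ℝ, IsPositive (ξ t))
    (γ : ℝ → Hsp)
    (htraj : IsCompleteTrajectory b ω γ) (hbdd : BddTraj γ)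
    (hnn : ∀ t : ℝ, ∀ᵐ x ∂μ01, 0 ≤ γ t x)
    (hne0 : ¬ ∀ t : ℝ, γ t = 0)
    (hneξ : ¬ ∀ t : ℝ, γ t = ξ t) :
    ∃ τ : ℝ, (∀ t ≤ τ, γ t = 0) ∧
      IsLinearSolution b ω τ γ ∧
      (∀ w : ℝ → Hsp, IsLinearSolution b ω τ w → w τ = 0 →
        ∀ t, τ ≤ t → w t = γ t) ∧
      Filter.Tendsto γ Filter.atBot (nhds 0) ∧
      Filter.Tendsto (fun t => ‖γ t - ξ t‖) Filter.atTop (nhds 0) := by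
  have hb : ∀ t, 0 ≤ b t := fun t => hC.b0pos.le.trans (hC.blb t)
  have hω : ∀ t, 0 ≤ ω t := fun t => hC.ω0nonneg.trans (hC.ωlb t)
  have hξlin : ∀ τ, IsLinearSolution b ω τ ξ := fun τ =>
    linear_of_pos (hξtraj τ) fun t _ => (hξpos t).ae_pos
  set κ := Real.pi ^ 2 - ω1 with hκ
  have hκ0 : 0 < κ := sub_pos.2 hω1
  have hpos : ∀ s t, s < t → γ s ≠ 0 → ∀ᵐ x ∂μ01, 0 < γ t x := by
    intro s t hst hne
    obtain ⟨r, u', uxx, h⟩ := htraj (s - 1)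
    exact pos_after hb hω h hnn (by linarith) hst hne
  have hγc : Continuous γ := by
    rw [continuous_iff_continuousAt]
    intro t
    obtain ⟨r, u', uxx, h⟩ := htraj (t - 1)
    exact h.cont.continuousAt (Ici_mem_nhds (by linarith))
  have hne_up : ∀ s t, s < t → γ s ≠ 0 → γ t ≠ 0 := by
    intro s t hst hne h0
    have hp := hpos s t hst hne
    rw [h0] at hp
    have hF : ∀ᵐ x ∂μ01, False := by
      filter_upwards [hp, Lp.coeFn_zero ℝ 2 μ01] with x a1 a2
      rw [a2] at a1
      exact lt_irrefl _ a1
    rw [eventually_false_iff_eq_bot, ae_eq_bot] at hF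
    have : μ01 univ = 1 := by simp [μ01]
    rw [hF] at this
    simp at this
  have hlin : ∀ τ, (∀ t, τ < t → γ t ≠ 0) → IsLinearSolution b ω τ γ := by
    intro τ h
    refine linear_of_pos (htraj τ) fun t ht => ?_
    exact hpos ((τ + t) / 2) t (by linarith) (h _ (by linarith))
  set S : Set ℝ := {t | γ t = 0} with hS
  by_cases hSe : S.Nonempty
  swap
  · exfalso
    have hall : ∀ t, γ t ≠ 0 := fun t ht => hSe ⟨t, ht⟩
    apply hneξ
    intro t
    obtain ⟨M1, hM1⟩ := hbdd
    obtain ⟨M2, hM2⟩ := hξbdd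
    have hle : ∀ s ≤ t, Real.exp (2 * κ * t) * ‖γ t - ξ t‖ ^ 2 ≤
        Real.exp (2 * κ * s) * (M1 + M2) ^ 2 := by
      intro s hs
      have := linear_decay hC.ωub (hlin s fun t _ => hall t) (hξlin s) le_rfl hs
      refine this.trans ?_
      gcongr
      exact (norm_sub_le _ _).trans (add_le_add (hM1 s) (hM2 s))
    have hlim : Tendsto (fun s => Real.exp (2 * κ * s) * (M1 + M2) ^ 2) atBot (𝓝 0) := by
      have : Tendsto (fun s : ℝ => 2 * κ * s) atBot atBot :=
        tendsto_id.const_mul_atBot (by positivity)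
      simpa using (Real.tendsto_exp_atBot.comp this).mul_const ((M1 + M2) ^ 2)
    have h0 : Real.exp (2 * κ * t) * ‖γ t - ξ t‖ ^ 2 ≤ 0 := by
      refine ge_of_tendsto hlim ?_
      filter_upwards [Iic_mem_atBot t] with s hs using hle s hs
    have hE := Real.exp_pos (2 * κ * t)
    have h1 : ‖γ t - ξ t‖ ^ 2 ≤ 0 := by
      by_contra hcon
      push Not at hcon
      have := mul_pos hE hcon
      linarith
    have h2 : ‖γ t - ξ t‖ = 0 := by
      have := sq_nonneg ‖γ t - ξ t‖
      exact pow_eq_zero_iff (two_ne_zero) |>.1 (le_antisymm h1 this)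
    exact sub_eq_zero.1 (norm_eq_zero.1 h2)
  have hSc : IsClosed S := isClosed_eq hγc continuous_const
  have hSdown : ∀ s t, s ≤ t → γ t = 0 → γ s = 0 := by
    intro s t hst ht
    rcases hst.eq_or_lt with rfl | hlt
    · exact ht
    by_contra hne
    exact hne_up s t hlt hne ht
  have hSb : BddAbove S := by
    push Not at hne0
    obtain ⟨t0, ht0⟩ := hne0
    refine ⟨t0, fun t ht => ?_⟩
    by_contra hcon
    push Not at hcon
    exact ht0 (hSdown t0 t hcon.le ht)
  set τ := sSup S with hτ
  have hτS : γ τ = 0 := hSc.csSup_mem hSe hSb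
  have hafter : ∀ t, τ < t → γ t ≠ 0 := fun t ht h0 => absurd (le_csSup hSb h0) (not_le.2 ht)
  have hγlin := hlin τ hafter
  have hbefore : ∀ t ≤ τ, γ t = 0 := fun t ht => hSdown t τ ht hτS
  refine ⟨τ, hbefore, hγlin, ?_, ?_, ?_⟩
  · intro w hw hw0 t ht
    have h1 := linear_decay hC.ωub hw hγlin le_rfl ht
    rw [hw0, hτS, sub_zero, norm_zero] at h1
    have hE := Real.exp_pos (2 * (Real.pi ^ 2 - ω1) * t)
    have h2 : ‖w t - γ t‖ ^ 2 ≤ 0 := by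
      by_contra hcon
      push Not at hcon
      have := mul_pos hE hcon
      simp at h1
      linarith
    have h3 : ‖w t - γ t‖ = 0 :=
      pow_eq_zero_iff (two_ne_zero) |>.1 (le_antisymm h2 (sq_nonneg _))
    exact sub_eq_zero.1 (norm_eq_zero.1 h3)
  · apply tendsto_const_nhds.congr'
    filter_upwards [Iic_mem_atBot τ] with t ht
    exact (hbefore t ht).symm
  · have hsq : Tendsto (fun t => ‖γ t - ξ t‖ ^ 2) atTop (𝓝 0) := by
      have hlim : Tendsto (fun t => Real.exp (-(2 * κ * t)) *
          (Real.exp (2 * κ * τ) * ‖γ τ - ξ τ‖ ^ 2)) atTop (𝓝 0) := by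
        have : Tendsto (fun s : ℝ => 2 * κ * s) atTop atTop :=
          tendsto_id.const_mul_atTop (by positivity)
        simpa using (Real.tendsto_exp_neg_atTop_nhds_zero.comp this).mul_const
          (Real.exp (2 * κ * τ) * ‖γ τ - ξ τ‖ ^ 2)
      refine squeeze_zero' (Eventually.of_forall fun t => sq_nonneg _) ?_ hlim
      filter_upwards [Ici_mem_atTop τ] with t ht
      have h1 := linear_decay hC.ωub hγlin (hξlin τ) le_rfl ht
      have hE := Real.exp_pos (-(2 * κ * t))
      have h2 := mul_le_mul_of_nonneg_left h1 hE.le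
      rw [← hκ, ← mul_assoc, ← Real.exp_add] at h2
      simpa using h2
    have := hsq.sqrt
    simpa [Real.sqrt_sq] using this

end aux

/-- under (Cond1) and `ω₁ < π²`, every bounded complete
trajectory of the non-negative solutions distinct from `0` and `ξ_M` vanishes up
to some time `τ` and afterwards coincides with the unique solution of the linear
problem `∂u/∂t − ∂²u/∂x² = b(t) + ω(t)u` with zero datum at `τ`; moreover it
converges to `0` as `t → −∞` and to `ξ_M` as `t → +∞`. -/
theorem statement14
    (b ω : ℝ → ℝ) (b0 b1 ω0 ω1 : ℝ) (hC : Cond1 b ω b0 b1 ω0 ω1)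
    (hω1 : ω1 < Real.pi ^ 2)
    (ξ : ℝ → Hsp)
    (hξtraj : IsCompleteTrajectory b ω ξ) (hξbdd : BddTraj ξ)
    (hξpos : ∀ t : ℝ, IsPositive (ξ t))
    (hξuniq : ∀ γ : ℝ → Hsp, IsCompleteTrajectory b ω γ → BddTraj γ →
      (∀ t : ℝ, IsPositive (γ t)) → ∀ t : ℝ, γ t = ξ t)
    (γ : ℝ → Hsp)
    (htraj : IsCompleteTrajectory b ω γ) (hbdd : BddTraj γ)
    (hnn : ∀ t : ℝ, ∀ᵐ x ∂μ01, 0 ≤ γ t x)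
    (hne0 : ¬ ∀ t : ℝ, γ t = 0)
    (hneξ : ¬ ∀ t : ℝ, γ t = ξ t) :
    ∃ τ : ℝ, (∀ t ≤ τ, γ t = 0) ∧
      IsLinearSolution b ω τ γ ∧
      (∀ w : ℝ → Hsp, IsLinearSolution b ω τ w → w τ = 0 →
        ∀ t, τ ≤ t → w t = γ t) ∧
      Filter.Tendsto γ Filter.atBot (nhds 0) ∧
      Filter.Tendsto (fun t => ‖γ t - ξ t‖) Filter.atTop (nhds 0) := by
  exact main_aux b ω b0 b1 ω0 ω1 hC hω1 ξ hξtraj hξbdd hξpos γ htraj hbdd hnn hne0 hneξ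

end
end

section
/- Let H be a (separable) Hilbert space of the form H = L²(0,1). Suppose h_n → h weakly in L¹(t₁,t₂;H), and suppose that for a.a. (t,x) ∈ (t₁,t₂)×(0,1) there exists N(t,x) such that h_n(t,x) ∈ C(t,x) for all n ≥ N(t,x), where C(t,x) ⊂ ℝ is a closed convex set. Then h(t,x) ∈ C(t,x) for a.a. (t,x). -/
open MeasureTheory Set

noncomputable section

instance : IsFiniteMeasure μ01 := by unfold μ01; infer_instance


lemma inner_nonneg' {f g : Hsp} (H : ∀ᵐ x ∂μ01, 0 ≤ f x * g x) : 0 ≤ inner ℝ f g := by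
  rw [L2.inner_def]
  apply integral_nonneg_of_ae
  filter_upwards [H] with x hx
  simpa [mul_comm] using hx

lemma mono_lim (f : ℕ → Hsp) (hf : Antitone f) (h0 : ∀ k, 0 ≤ f k) :
    ∃ L, Filter.Tendsto f Filter.atTop (nhds L) := by
  have key : ∀ m n, m ≤ n → ‖f m - f n‖ ^ 2 ≤ ‖f m‖ ^ 2 - ‖f n‖ ^ 2 := by
    intro m n hmn
    have h1 : 0 ≤ inner ℝ (f n) (f m - f n) := by
      apply inner_nonneg'
      have a1 := (Lp.coeFn_le _ _).2 (h0 n)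
      have a2 := (Lp.coeFn_le _ _).2 (hf hmn)
      filter_upwards [a1, a2, Lp.coeFn_sub (f m) (f n), Lp.coeFn_zero ℝ 2 μ01] with x b1 b2 b3 b4
      rw [b3]
      rw [b4] at b1
      exact mul_nonneg b1 (by simpa using b2)
    have h2 : ‖f m‖ ^ 2 = ‖f n + (f m - f n)‖ ^ 2 := by congr 2; abel
    rw [h2, norm_add_sq_real]
    linarith
  have hanti : Antitone fun k => ‖f k‖ ^ 2 := by
    intro m n hmn
    have := key m n hmn
    have := sq_nonneg ‖f m - f n‖
    simp only
    linarith
  have hc : CauchySeq fun k => ‖f k‖ ^ 2 :=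
    (tendsto_atTop_ciInf hanti ⟨0, by rintro _ ⟨k, rfl⟩; positivity⟩).cauchySeq
  apply cauchySeq_tendsto_of_complete
  rw [Metric.cauchySeq_iff'] at hc ⊢
  intro ε hε
  obtain ⟨N, hN⟩ := hc (ε ^ 2) (by positivity)
  refine ⟨N, fun n hn => ?_⟩
  have h1 := hN n hn
  have h2 := key N n hn
  rw [Real.dist_eq, abs_lt] at h1
  rw [dist_comm, dist_eq_norm]
  exact lt_of_pow_lt_pow_left₀ 2 hε.le (by linarith)

/-- Truncated decreasing test functions. -/
def GG (cq : Hsp) (u : Hsp) (a : ℕ → Hsp) : ℕ → Hsp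
  | 0 => (Lp.const 2 μ01 (1:ℝ) : Hsp) ⊓ ((cq - u) ⊔ 0)
  | k + 1 => GG cq u a k ⊓ ((a k - cq) ⊔ 0)

lemma one_nonneg' : (0 : Hsp) ≤ (Lp.const 2 μ01 (1:ℝ) : Hsp) := by
  rw [← Lp.coeFn_le]
  filter_upwards [Lp.coeFn_zero ℝ 2 μ01, Lp.coeFn_const 2 μ01 (1:ℝ)] with x h1 h2
  rw [h1, h2]; simp

lemma GG_nonneg (cq u : Hsp) (a : ℕ → Hsp) (k : ℕ) : 0 ≤ GG cq u a k := by
  induction k with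
  | zero => exact le_inf one_nonneg' le_sup_right
  | succ k ih => exact le_inf ih le_sup_right

lemma GG_anti (cq u : Hsp) (a : ℕ → Hsp) : Antitone (GG cq u a) :=
  antitone_nat_of_succ_le fun _ => inf_le_left

lemma GG_lower (q : ℝ) (u : Hsp) (a : ℕ → Hsp) (k : ℕ) :
    ∀ᵐ x ∂μ01, ∀ d : ℝ, d ≤ 1 → d ≤ q - u x → (∀ n, d ≤ a n x - q) →
      d ≤ GG (Lp.const 2 μ01 q) u a k x := by
  induction k with
  | zero =>
    filter_upwards [Lp.coeFn_inf (Lp.const 2 μ01 (1:ℝ) : Hsp) ((Lp.const 2 μ01 q - u) ⊔ 0),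
      Lp.coeFn_sup (Lp.const 2 μ01 q - u) 0, Lp.coeFn_sub (Lp.const 2 μ01 q) u,
      Lp.coeFn_const 2 μ01 q, Lp.coeFn_const 2 μ01 (1:ℝ)] with x h1 h2 h3 h4 h5 d d1 d2 _
    simp only [GG]
    rw [h1, Pi.inf_apply, h2, Pi.sup_apply, h3, Pi.sub_apply, h4, h5]
    exact le_inf d1 (le_sup_of_le_left d2)
  | succ k ih =>
    filter_upwards [ih, Lp.coeFn_inf (GG (Lp.const 2 μ01 q) u a k) ((a k - Lp.const 2 μ01 q) ⊔ 0),
      Lp.coeFn_sup (a k - Lp.const 2 μ01 q) 0, Lp.coeFn_sub (a k) (Lp.const 2 μ01 q),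
      Lp.coeFn_const 2 μ01 q] with x ih h1 h2 h3 h4 d d1 d2 d3
    simp only [GG]
    rw [h1, Pi.inf_apply, h2, Pi.sup_apply, h3, Pi.sub_apply, h4]
    exact le_inf (ih d d1 d2 d3) (le_sup_of_le_left (d3 k))

lemma exists_lim (q : ℝ) (u : Hsp) (a : ℕ → Hsp) :
    ∃ L : Hsp, Filter.Tendsto (GG (Lp.const 2 μ01 q) u a) Filter.atTop (nhds L) ∧
      0 ≤ L ∧ (∀ k, L ≤ GG (Lp.const 2 μ01 q) u a k) ∧
      ∀ᵐ x ∂μ01, ∀ d : ℝ, d ≤ 1 → d ≤ q - u x → (∀ n, d ≤ a n x - q) → d ≤ L x := by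
  obtain ⟨L, hL⟩ := mono_lim _ (GG_anti (Lp.const 2 μ01 q) u a) (GG_nonneg _ _ _)
  refine ⟨L, hL, ge_of_tendsto' hL (GG_nonneg _ _ _), (GG_anti _ u a).le_of_tendsto hL, ?_⟩
  obtain ⟨ns, -, h⟩ := (tendstoInMeasure_of_tendsto_Lp hL).exists_seq_tendsto_ae
  filter_upwards [h, ae_all_iff.2 (GG_lower q u a)] with x h1 h2 d d1 d2 d3
  exact ge_of_tendsto' h1 fun i => h2 _ d d1 d2 d3

lemma pos_mul {f v L : Hsp} (h0 : 0 ≤ L) (hL : L ≤ (f - v) ⊔ 0) :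
    ∀ᵐ x ∂μ01, 0 ≤ (f - v : Hsp) x * L x := by
  filter_upwards [(Lp.coeFn_le _ _).2 h0, (Lp.coeFn_le _ _).2 hL, Lp.coeFn_zero ℝ 2 μ01,
    Lp.coeFn_sup (f - v) 0] with x h1 h2 h3 h4
  rw [h3] at h1
  rw [h4, Pi.sup_apply, h3] at h2
  simp only [Pi.zero_apply] at h1 h2
  rcases le_total 0 ((f - v : Hsp) x) with h | h
  · exact mul_nonneg h h1
  · rw [sup_of_le_right h] at h2
    rw [le_antisymm h2 h1]; simp

lemma key (t₁ t₂ : ℝ)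
    (hn : ℕ → ℝ → Hsp) (h : ℝ → Hsp)
    (hmemn : ∀ n, MemLp (hn n) 1 (volume.restrict (Ioo t₁ t₂)))
    (hmem : MemLp h 1 (volume.restrict (Ioo t₁ t₂)))
    (hweak : ∀ g : ℝ → Hsp, MemLp g ⊤ (volume.restrict (Ioo t₁ t₂)) →
      Filter.Tendsto
        (fun n => ∫ t in Ioo t₁ t₂, (inner ℝ (hn n t) (g t) : ℝ))
        Filter.atTop
        (nhds (∫ t in Ioo t₁ t₂, (inner ℝ (h t) (g t) : ℝ))))
    (q d : ℝ) (hd : 0 < d) (N : ℕ) :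
    ∀ᵐ t ∂(volume.restrict (Ioo t₁ t₂)), ∀ᵐ x ∂μ01,
      ¬ (h t x < q ∧ ∀ n ≥ N, q + d ≤ hn n t x) := by
  set cq : Hsp := Lp.const 2 μ01 q with hcq
  choose g hg g0 gle glow using fun t => exists_lim q (h t) (fun k => hn (N + k) t)
  rw [← hcq] at hg gle
  have gmeas : AEStronglyMeasurable g (volume.restrict (Ioo t₁ t₂)) := by
    refine aestronglyMeasurable_of_tendsto_ae Filter.atTop
      (f := fun k t => GG cq (h t) (fun k => hn (N + k) t) k) ?_ (Filter.Eventually.of_forall hg)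
    intro k
    induction k with
    | zero =>
      exact aestronglyMeasurable_const.inf
        ((aestronglyMeasurable_const.sub hmem.1).sup aestronglyMeasurable_const)
    | succ k ih =>
      exact ih.inf (((hmemn _).1.sub aestronglyMeasurable_const).sup aestronglyMeasurable_const)
  have gbd : ∀ t, ‖g t‖ ≤ ‖(Lp.const 2 μ01 (1:ℝ) : Hsp)‖ := by
    intro t
    apply norm_le_norm_of_abs_le_abs
    rw [abs_of_nonneg (g0 t), abs_of_nonneg one_nonneg']
    exact (gle t 0).trans inf_le_left
  have gtop : MemLp g ⊤ (volume.restrict (Ioo t₁ t₂)) :=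
    memLp_top_of_bound gmeas _ (Filter.Eventually.of_forall gbd)
  have hint : ∀ f : ℝ → Hsp, MemLp f 1 (volume.restrict (Ioo t₁ t₂)) →
      Integrable (fun t => (inner ℝ (f t) (g t) : ℝ)) (volume.restrict (Ioo t₁ t₂)) := by
    intro f hf
    refine Integrable.mono' ((memLp_one_iff_integrable.1 hf).norm.mul_const
      ‖(Lp.const 2 μ01 (1:ℝ) : Hsp)‖) (hf.1.inner gmeas) (Filter.Eventually.of_forall fun t => ?_)
    exact (norm_inner_le_norm _ _).trans (mul_le_mul_of_nonneg_left (gbd t) (norm_nonneg _))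
  have hcmem : MemLp (fun _ : ℝ => cq) 1 (volume.restrict (Ioo t₁ t₂)) := memLp_const _
  have hpos : ∀ t, ∀ᵐ x ∂μ01, 0 ≤ (cq - h t : Hsp) x * g t x := fun t =>
    pos_mul (g0 t) ((gle t 0).trans inf_le_right)
  have hpt : ∀ t, 0 ≤ (inner ℝ (cq - h t) (g t) : ℝ) := fun t => inner_nonneg' (hpos t)
  have hge : ∫ t in Ioo t₁ t₂, (inner ℝ cq (g t) : ℝ) ≤
      ∫ t in Ioo t₁ t₂, (inner ℝ (h t) (g t) : ℝ) := by
    refine ge_of_tendsto (hweak g gtop) ?_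
    filter_upwards [Filter.eventually_ge_atTop N] with n hnN
    obtain ⟨k, rfl⟩ := Nat.exists_eq_add_of_le hnN
    refine integral_mono (hint _ hcmem) (hint _ (hmemn _)) fun t => ?_
    have := inner_nonneg' (pos_mul (g0 t) ((gle t (k+1)).trans inf_le_right))
    rw [inner_sub_left] at this
    simpa using this
  have hi : Integrable (fun t => (inner ℝ (cq - h t) (g t) : ℝ))
      (volume.restrict (Ioo t₁ t₂)) := hint _ (hcmem.sub hmem)
  have hz : ∫ t in Ioo t₁ t₂, (inner ℝ (cq - h t) (g t) : ℝ) = 0 := by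
    refine le_antisymm ?_ (integral_nonneg hpt)
    simp_rw [inner_sub_left]
    rw [integral_sub (hint _ hcmem) (hint _ hmem)]
    linarith
  rw [integral_eq_zero_iff_of_nonneg hpt hi] at hz
  filter_upwards [hz] with t ht
  simp only [Pi.zero_apply] at ht
  rw [L2.inner_def, integral_eq_zero_iff_of_nonneg_ae ?_ (L2.integrable_inner _ _)] at ht
  · filter_upwards [ht, glow t, Lp.coeFn_sub cq (h t), Lp.coeFn_const 2 μ01 q]
      with x h1 h2 h3 h4 ⟨h5, h6⟩
    have e := h2 (min 1 (min (q - h t x) d)) (min_le_left _ _)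
      ((min_le_right _ _).trans (min_le_left _ _))
      (fun n => ((min_le_right _ _).trans (min_le_right _ _)).trans
        (by have := h6 (N + n) (by omega); linarith))
    have e2 : 0 < min 1 (min (q - h t x) d) :=
      lt_min one_pos (lt_min (sub_pos.2 h5) hd)
    have e3 : (cq - h t : Hsp) x = q - h t x := by
      rw [h3, Pi.sub_apply, hcq, h4]; rfl
    have h1' : g t x * (cq - h t : Hsp) x = 0 := by simpa [mul_comm] using h1
    rw [e3] at h1'
    have := mul_pos (e2.trans_le e) (sub_pos.2 h5)
    linarith
  · filter_upwards [hpos t] with x hx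
    simpa [mul_comm] using hx

lemma sep_below {C : Set ℝ} (hc : IsClosed C) (hv : Convex ℝ C) {y c : ℝ} (hcC : c ∈ C)
    (hy : y ∉ C) (hlt : y < c) :
    ∃ q : ℚ, ∃ m : ℕ, y < q ∧ ∀ z ∈ C, (q : ℝ) + 1 / ((m : ℝ) + 1) ≤ z := by
  have hbelow : ∀ z ∈ C, y < z := by
    intro z hz
    by_contra! hzy
    exact hy (hv.ordConnected.out hz hcC ⟨hzy, hlt.le⟩)
  have hb : BddBelow C := ⟨y, fun z hz => (hbelow z hz).le⟩
  have hs := hbelow _ (hc.csInf_mem ⟨c, hcC⟩ hb)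
  obtain ⟨q, hq1, hq2⟩ := exists_rat_btwn hs
  obtain ⟨m, hm⟩ := exists_nat_one_div_lt (sub_pos.2 hq2)
  exact ⟨q, m, hq1, fun z hz => by have := csInf_le hb hz; linarith⟩

/-- if `hₙ → h` weakly in `L¹(t₁,t₂;H)` and for a.a. `(t,x)` the
values `hₙ(t,x)` eventually belong to a closed convex set `C(t,x) ⊆ ℝ`, then
`h(t,x) ∈ C(t,x)` for a.a. `(t,x)`. -/
theorem statement17
    (t₁ t₂ : ℝ) (ht : t₁ < t₂)
    (hn : ℕ → ℝ → Hsp) (h : ℝ → Hsp)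
    (hmemn : ∀ n, MemLp (hn n) 1 (volume.restrict (Ioo t₁ t₂)))
    (hmem : MemLp h 1 (volume.restrict (Ioo t₁ t₂)))
    (hweak : ∀ g : ℝ → Hsp, MemLp g ⊤ (volume.restrict (Ioo t₁ t₂)) →
      Filter.Tendsto
        (fun n => ∫ t in Ioo t₁ t₂, (inner ℝ (hn n t) (g t) : ℝ))
        Filter.atTop
        (nhds (∫ t in Ioo t₁ t₂, (inner ℝ (h t) (g t) : ℝ))))
    (C : ℝ → ℝ → Set ℝ)
    (hCclosed : ∀ t x, IsClosed (C t x))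
    (hCconvex : ∀ t x, Convex ℝ (C t x))
    (hmemC : ∀ᵐ t ∂(volume.restrict (Ioo t₁ t₂)), ∀ᵐ x ∂μ01,
      ∃ N : ℕ, ∀ n ≥ N, hn n t x ∈ C t x) :
    ∀ᵐ t ∂(volume.restrict (Ioo t₁ t₂)), ∀ᵐ x ∂μ01, h t x ∈ C t x := by
  have A := key t₁ t₂ hn h hmemn hmem hweak
  have B := key t₁ t₂ (fun n t => - hn n t) (fun t => - h t) (fun n => (hmemn n).neg) hmem.neg
    (by
      intro g hg
      simp only [inner_neg_left, integral_neg]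
      exact (hweak g hg).neg)
  have A' := ae_all_iff.2 fun q : ℚ => ae_all_iff.2 fun m : ℕ => ae_all_iff.2 fun N : ℕ =>
    A q (1 / ((m : ℝ) + 1)) Nat.one_div_pos_of_nat N
  have B' := ae_all_iff.2 fun q : ℚ => ae_all_iff.2 fun m : ℕ => ae_all_iff.2 fun N : ℕ =>
    B q (1 / ((m : ℝ) + 1)) Nat.one_div_pos_of_nat N
  filter_upwards [A', B', hmemC] with t a b hC
  have a' := ae_all_iff.2 fun q : ℚ => ae_all_iff.2 fun m : ℕ => ae_all_iff.2 fun N : ℕ => a q m N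
  have b' := ae_all_iff.2 fun q : ℚ => ae_all_iff.2 fun m : ℕ => ae_all_iff.2 fun N : ℕ => b q m N
  filter_upwards [a', b', hC, Lp.coeFn_neg (h t), ae_all_iff.2 fun n => Lp.coeFn_neg (hn n t)]
    with x a b ⟨N, hN⟩ n1 n2
  by_contra hx
  have hNN := hN N le_rfl
  rcases lt_or_gt_of_ne (fun e => hx (e ▸ hNN) : h t x ≠ hn N t x) with hlt | hlt
  · obtain ⟨q, m, h1, h2⟩ := sep_below (hCclosed t x) (hCconvex t x) hNN hx hlt
    exact a q m N ⟨h1, fun n hn => h2 _ (hN n hn)⟩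
  · obtain ⟨q, m, h1, h2⟩ := sep_below (C := -(C t x)) (hCclosed t x).neg (hCconvex t x).neg
      (y := - h t x) (c := - hn N t x) (by simpa using hNN) (by simpa using hx) (by linarith)
    refine b q m N ⟨by rw [n1]; exact h1, fun n hn => ?_⟩
    rw [n2]
    exact h2 _ (by simpa using hN n hn)

end
end
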